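/- Let 0 < R < 1 and let (C_k) be a sequence of Reed-Muller codes C_k = RM(m_k, d_k) with lengths n_k = 2^{m_k} → ∞ and rates R(C_k) → R. Then there exists a sequence of reals (R**_k) with R**_k → R such that μ_{C_k}(R**_k) = o(√(n_k)), i.e., μ_{C_k}(R**_k)/√(n_k) → 0 as k → ∞. -/

import Mathlib

/-!
Write `n = 2^m`, `M = μ_C` and `h` for the EXIT function, the probability that a fixed coordinate
is determined by the other coordinates in a random set of density `l`. By Russo's formula
`M' = n h`, since all coordinates are equivalent under the doubly transitive automorphism group
(`RM_doublyTransitive`). Two differential inequalities are combined.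

*Sharp threshold.* The derivative of `h` is the total influence, and by double transitivity the
influences of all other coordinates are equal. The logarithmic Sobolev inequality on the biased cube
(`lsi`) gives a Kahn–Kalai–Linial type inequality (`kkl`), whence `h' ≥ (m/20) h (1 - h)`
(`exit_deriv_ge`). The area theorem `∫ h = 1 - R(C)` keeps `h` away from `1` slightly below the
rate, so `h`, and with it `M / n`, is at most `exp(-c m)` at `R - 2ε` (`exitAt_small`).

*Bootstrap.* For a set `S` let `circ S` be the set of elements of `S` that are determined by the
rest of `S`. Then `M'` is at least the mean of `#(circ S)`, and `f_C(circ S) = f_C(S)`. The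
`(u, u + v)` recursion shows by induction on `m` that every set `A` satisfies
`f_C(A) ≤ θ^(-d-1) |A|^β` with `θ = 2^β - 1` (`nullity_bound`). A positive rate forces `d` to be
large (`RM_finrank_le`), so whenever `f_C(S) ≤ τ := n exp(-δ m)` one gets `#(circ S) ≥ K f_C(S)`
with `K = m^2` (`circ_large`). Larger values of `f_C` are rare: the Efron–Stein inequality bounds
the variance of `f_C` by `n`, and Chebyshev's inequality yields `M' ≥ K (M - 4 n / τ)`
(`muC_deriv_ge`). Integrating from `R - 3ε` to `R - 2ε`,
`M(R - 3ε) ≤ 4 exp(δ m) + exp(-m² ε) 2^m`, which is `o(√n)` because `δ ≤ 1/4 < (log 2) / 2`.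
A diagonal choice of `ε` tending to `0` completes the proof.
-/

open Finset Filter

/-- The rate of a binary linear code. -/
noncomputable def codeRate {ι : Type} [Fintype ι] (C : Submodule (ZMod 2) (ι → ZMod 2)) : ℝ :=
  (Module.finrank (ZMod 2) C : ℝ) / (Fintype.card ι : ℝ)

/-- `weightEnum C i` is the number of codewords of Hamming weight `i`. -/
noncomputable def weightEnum {ι : Type} [Fintype ι] (C : Submodule (ZMod 2) (ι → ZMod 2))
    (i : ℕ) : ℕ :=
  Nat.card {x : ι → ZMod 2 // x ∈ C ∧ hammingNorm x = i}

/-- The permutation `π` of coordinates maps the code `C` onto itself. -/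
def PreservesCode {ι : Type} [Fintype ι] (C : Submodule (ZMod 2) (ι → ZMod 2))
    (π : Equiv.Perm ι) : Prop :=
  ∀ x : ι → ZMod 2, x ∈ C ↔ x ∘ π ∈ C

/-- The automorphism group of `C` acts 2-transitively on coordinates. -/
def DoublyTransitive {ι : Type} [Fintype ι] (C : Submodule (ZMod 2) (ι → ZMod 2)) : Prop :=
  ∀ i₁ j₁ i₂ j₂ : ι, i₁ ≠ j₁ → i₂ ≠ j₂ →
    ∃ π : Equiv.Perm ι, PreservesCode C π ∧ π i₁ = i₂ ∧ π j₁ = j₂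

/-- Minimal distance: the least Hamming weight of a nonzero codeword. -/
noncomputable def minDist {ι : Type} [Fintype ι] (C : Submodule (ZMod 2) (ι → ZMod 2)) : ℕ :=
  sInf {d | ∃ x ∈ C, x ≠ 0 ∧ hammingNorm x = d}

/-- Reed-Muller code RM(m,d). -/
noncomputable def ReedMuller (m d : ℕ) : Submodule (ZMod 2) ((Fin m → ZMod 2) → ZMod 2) :=
  Submodule.map
    (LinearMap.pi fun v : Fin m → ZMod 2 => (MvPolynomial.aeval v).toLinearMap)
    (MvPolynomial.restrictTotalDegree (Fin m) (ZMod 2) d)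

open scoped Classical in
/-- ML block error probability on BSC(p). -/
noncomputable def Perr {ι : Type} [Fintype ι] (C : Submodule (ZMod 2) (ι → ZMod 2)) (p : ℝ) : ℝ :=
  ∑ z : ι → ZMod 2,
    if ∃ x ∈ C, x ≠ 0 ∧ hammingNorm (z + x) ≤ hammingNorm z then
      p ^ hammingNorm z * (1 - p) ^ (Fintype.card ι - hammingNorm z) else 0

/-- Rank of the projection of `C` to the coordinates in `S`. -/
noncomputable def rankC {ι : Type} [Fintype ι] (C : Submodule (ZMod 2) (ι → ZMod 2))
    (S : Finset ι) : ℕ :=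
  Module.finrank (ZMod 2)
    (C.map (LinearMap.funLeft (ZMod 2) (ZMod 2) (Subtype.val : {i // i ∈ S} → ι)))

/-- `f_C(S) = |S| - r_C(S)`. -/
noncomputable def fC {ι : Type} [Fintype ι] (C : Submodule (ZMod 2) (ι → ZMod 2))
    (S : Finset ι) : ℝ :=
  (S.card : ℝ) - (rankC C S : ℝ)

/-- `μ_C(λ) = E_{S ~ λ} f_C(S)`. -/
noncomputable def muC {ι : Type} [Fintype ι] (C : Submodule (ZMod 2) (ι → ZMod 2)) (l : ℝ) : ℝ :=
  ∑ S : Finset ι, l ^ S.card * (1 - l) ^ (Fintype.card ι - S.card) * fC C S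

/-- Bit erasure probability `P_{b,i}(p)`. -/
noncomputable def Pbi {ι : Type} [Fintype ι] [DecidableEq ι]
    (C : Submodule (ZMod 2) (ι → ZMod 2)) (i : ι) (p : ℝ) : ℝ :=
  ∑ R ∈ ((Finset.univ : Finset ι).erase i).powerset,
    (1 - p) ^ R.card * p ^ (Fintype.card ι - R.card) *
      (if rankC C R < rankC C (insert i R) then (1 : ℝ) else 0)

/-- The average EXIT function `h(p)`. -/
noncomputable def exitAvg {ι : Type} [Fintype ι] [DecidableEq ι]
    (C : Submodule (ZMod 2) (ι → ZMod 2)) (p : ℝ) : ℝ :=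
  (1 / (Fintype.card ι : ℝ)) * ∑ i : ι, Pbi C i p / p

/-- The dual code. -/
def dualCode {ι : Type} [Fintype ι] (C : Submodule (ZMod 2) (ι → ZMod 2)) :
    Submodule (ZMod 2) (ι → ZMod 2) where
  carrier := {y | ∀ x ∈ C, ∑ i, x i * y i = 0}
  zero_mem' := by intro x hx; simp
  add_mem' := by
    intro y z hy hz x hx
    simp only [Pi.add_apply, mul_add, Finset.sum_add_distrib, Set.mem_setOf_eq] at *
    rw [hy x hx, hz x hx, add_zero]
  smul_mem' := by
    intro c y hy x hx
    simp only [Pi.smul_apply, smul_eq_mul]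
    rw [show (∑ i, x i * (c * y i)) = c * ∑ i, x i * y i by rw [Finset.mul_sum]; congr 1; funext i; ring, hy x hx, mul_zero]

/-! ### Analysis on the biased cube -/

section Cube
variable {ι : Type}

/-- Expectation of `F S`, where `S ⊆ A` contains every element of `A` independently with
probability `l`. -/
noncomputable def Ex (l : ℝ) (A : Finset ι) (F : Finset ι → ℝ) : ℝ :=
  ∑ S ∈ A.powerset, l ^ #S * (1 - l) ^ (#A - #S) * F S

lemma Ex_empty (l : ℝ) (F : Finset ι → ℝ) : Ex l ∅ F = F ∅ := by simp [Ex]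

lemma Ex_congr {l : ℝ} {A : Finset ι} {F G : Finset ι → ℝ} (h : ∀ S ⊆ A, F S = G S) :
    Ex l A F = Ex l A G :=
  Finset.sum_congr rfl fun S hS => by rw [h S (Finset.mem_powerset.1 hS)]

lemma Ex_mono {l : ℝ} (h0 : 0 ≤ l) (h1 : l ≤ 1) {A : Finset ι} {F G : Finset ι → ℝ}
    (h : ∀ S ⊆ A, F S ≤ G S) : Ex l A F ≤ Ex l A G :=
  Finset.sum_le_sum fun S hS => mul_le_mul_of_nonneg_left (h S (Finset.mem_powerset.1 hS))
    (mul_nonneg (pow_nonneg h0 _) (pow_nonneg (sub_nonneg.2 h1) _))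

lemma Ex_add (l : ℝ) (A : Finset ι) (F G : Finset ι → ℝ) :
    Ex l A (fun S => F S + G S) = Ex l A F + Ex l A G := by
  simp only [Ex, mul_add, Finset.sum_add_distrib]

lemma Ex_sub (l : ℝ) (A : Finset ι) (F G : Finset ι → ℝ) :
    Ex l A (fun S => F S - G S) = Ex l A F - Ex l A G := by
  simp only [Ex, mul_sub, Finset.sum_sub_distrib]

lemma Ex_mul (l : ℝ) (A : Finset ι) (c : ℝ) (F : Finset ι → ℝ) :
    Ex l A (fun S => c * F S) = c * Ex l A F := by
  simp only [Ex, Finset.mul_sum]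
  exact Finset.sum_congr rfl fun S _ => by ring

lemma Ex_sum {κ : Type} (l : ℝ) (A : Finset ι) (B : Finset κ) (F : κ → Finset ι → ℝ) :
    Ex l A (fun S => ∑ k ∈ B, F k S) = ∑ k ∈ B, Ex l A (F k) := by
  simp only [Ex, Finset.mul_sum]
  exact Finset.sum_comm

variable [DecidableEq ι]

/-- Discrete derivative of a set function in direction `i`. -/
def Dd (i : ι) (F : Finset ι → ℝ) (S : Finset ι) : ℝ := F (insert i S) - F (S.erase i)

lemma Ex_insert (l : ℝ) {A : Finset ι} {a : ι} (ha : a ∉ A) (F : Finset ι → ℝ) :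
    Ex l (insert a A) F = (1 - l) * Ex l A F + l * Ex l A (fun S => F (insert a S)) := by
  unfold Ex
  rw [Finset.sum_powerset_insert ha, Finset.mul_sum, Finset.mul_sum]
  congr 1
  · refine Finset.sum_congr rfl fun S hS => ?_
    have hS' : #S ≤ #A := Finset.card_le_card (Finset.mem_powerset.1 hS)
    rw [Finset.card_insert_of_notMem ha, Nat.succ_sub hS', pow_succ]
    ring
  · refine Finset.sum_congr rfl fun S hS => ?_
    have haS : a ∉ S := fun h => ha (Finset.mem_powerset.1 hS h)
    rw [Finset.card_insert_of_notMem ha, Finset.card_insert_of_notMem haS,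
      Nat.add_sub_add_right, pow_succ]
    ring

lemma Ex_const (l : ℝ) (A : Finset ι) (c : ℝ) : Ex l A (fun _ => c) = c := by
  induction A using Finset.induction_on with
  | empty => simp [Ex_empty]
  | insert a A ha ih => rw [Ex_insert l ha, ih]; ring

lemma Ex_nonneg {l : ℝ} (h0 : 0 ≤ l) (h1 : l ≤ 1) {A : Finset ι} {F : Finset ι → ℝ}
    (h : ∀ S ⊆ A, 0 ≤ F S) : 0 ≤ Ex l A F := by
  have := Ex_mono h0 h1 (A := A) (F := fun _ => 0) (G := F) h
  rwa [Ex_const] at this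

/-- Cauchy–Schwarz. -/
lemma Ex_mul_sq_le {l : ℝ} (h0 : 0 ≤ l) (h1 : l ≤ 1) (A : Finset ι) (F G : Finset ι → ℝ) :
    (Ex l A (fun S => F S * G S)) ^ 2 ≤ Ex l A (fun S => F S ^ 2) * Ex l A (fun S => G S ^ 2) := by
  have key : ∀ t : ℝ, 0 ≤ Ex l A (fun S => G S ^ 2) * (t * t)
      + (-2 * Ex l A (fun S => F S * G S)) * t + Ex l A (fun S => F S ^ 2) := by
    intro t
    have h := Ex_nonneg h0 h1 (A := A) (F := fun S => (t * t) * G S ^ 2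
      + ((-2 * t) * (F S * G S) + F S ^ 2)) (fun S _ => by nlinarith [sq_nonneg (F S - t * G S)])
    rw [Ex_add, Ex_add, Ex_mul, Ex_mul] at h
    linarith
  have := discrim_le_zero key
  unfold discrim at this
  nlinarith

lemma Ex_sq_le {l : ℝ} (h0 : 0 ≤ l) (h1 : l ≤ 1) (A : Finset ι) (F : Finset ι → ℝ) :
    (Ex l A F) ^ 2 ≤ Ex l A (fun S => F S ^ 2) := by
  have := Ex_mul_sq_le h0 h1 A F (fun _ => 1)
  simpa [Ex_const] using this

lemma Dd_insert {i a : ι} (h : i ≠ a) (F : Finset ι → ℝ) (S : Finset ι) :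
    Dd i F (insert a S) = Dd i (fun T => F (insert a T)) S := by
  unfold Dd
  rw [Finset.insert_comm, Finset.erase_insert_of_ne h.symm]

lemma Dd_self_insert (a : ι) (F : Finset ι → ℝ) (S : Finset ι) :
    Dd a F (insert a S) = Dd a F S := by
  unfold Dd
  rw [Finset.insert_idem, Finset.erase_insert_eq_erase]

lemma Dd_of_notMem {a : ι} {S : Finset ι} (h : a ∉ S) (F : Finset ι → ℝ) :
    Dd a F S = F (insert a S) - F S := by
  unfold Dd
  rw [Finset.erase_eq_of_notMem h]

/-- Expectation of a functional of a discrete derivative in an old direction. -/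
lemma Ex_insert_Dd (l : ℝ) {A : Finset ι} {a i : ι} (ha : a ∉ A) (hi : i ∈ A) (φ : ℝ → ℝ)
    (F : Finset ι → ℝ) :
    Ex l (insert a A) (fun S => φ (Dd i F S)) = (1 - l) * Ex l A (fun S => φ (Dd i F S))
      + l * Ex l A (fun S => φ (Dd i (fun T => F (insert a T)) S)) := by
  have hia : i ≠ a := fun h => ha (h ▸ hi)
  rw [Ex_insert l ha]
  simp only [Dd_insert hia]

/-- Expectation of a functional of the discrete derivative in the new direction. -/
lemma Ex_insert_Dd_self (l : ℝ) {A : Finset ι} {a : ι} (ha : a ∉ A) (φ : ℝ → ℝ)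
    (F : Finset ι → ℝ) :
    Ex l (insert a A) (fun S => φ (Dd a F S)) = Ex l A (fun S => φ (F (insert a S) - F S)) := by
  rw [Ex_insert l ha]
  simp only [Dd_self_insert]
  rw [← add_mul, sub_add_cancel, one_mul]
  exact Ex_congr fun S hS => by rw [Dd_of_notMem (fun h => ha (hS h))]

/-- Russo's formula. -/
lemma russo (A : Finset ι) (F : Finset ι → ℝ) (l : ℝ) :
    HasDerivAt (fun t => Ex t A F) (∑ i ∈ A, Ex l A (Dd i F)) l := by
  induction A using Finset.induction_on generalizing F with
  | empty => simpa [Ex_empty] using hasDerivAt_const l (F ∅)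
  | insert a A ha ih =>
    simp only [Ex_insert _ ha F]
    have h := (((hasDerivAt_id l).const_sub 1).mul (ih F)).add
      ((hasDerivAt_id l).mul (ih (fun S => F (insert a S))))
    refine h.congr_deriv ?_
    rw [Finset.sum_insert ha, Ex_insert_Dd_self l ha (fun x => x), Ex_sub]
    have : ∑ i ∈ A, Ex l (insert a A) (Dd i F) = (1 - l) * ∑ i ∈ A, Ex l A (Dd i F)
        + l * ∑ i ∈ A, Ex l A (Dd i (fun T => F (insert a T))) := by
      rw [Finset.mul_sum, Finset.mul_sum, ← Finset.sum_add_distrib]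
      exact Finset.sum_congr rfl fun i hi => Ex_insert_Dd l ha hi (fun x => x) F
    rw [this]
    simp only [id]
    ring

/-- The Dirichlet form `∑ i, E (D_i F)²`. -/
noncomputable def Dir (l : ℝ) (A : Finset ι) (F : Finset ι → ℝ) : ℝ :=
  ∑ i ∈ A, Ex l A (fun S => Dd i F S ^ 2)

lemma Dir_insert (l : ℝ) {A : Finset ι} {a : ι} (ha : a ∉ A) (F : Finset ι → ℝ) :
    Dir l (insert a A) F = Ex l A (fun S => (F (insert a S) - F S) ^ 2)
      + ((1 - l) * Dir l A F + l * Dir l A (fun S => F (insert a S))) := by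
  unfold Dir
  rw [Finset.sum_insert ha, Ex_insert_Dd_self l ha (fun x => x ^ 2), Finset.mul_sum,
    Finset.mul_sum, ← Finset.sum_add_distrib]
  congr 1
  exact Finset.sum_congr rfl fun i hi => Ex_insert_Dd l ha hi (fun x => x ^ 2) F

/-- The Efron–Stein (Poincaré) inequality. -/
lemma efron_stein {l : ℝ} (h0 : 0 ≤ l) (h1 : l ≤ 1) (A : Finset ι) (F : Finset ι → ℝ) :
    Ex l A (fun S => F S ^ 2) - (Ex l A F) ^ 2 ≤ Dir l A F := by
  induction A using Finset.induction_on generalizing F with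
  | empty => simp [Ex_empty, Dir]
  | insert a A ha ih =>
    rw [Dir_insert l ha, Ex_insert l ha, Ex_insert l ha]
    have i0 := ih F
    have i1 := ih (fun S => F (insert a S))
    have j := Ex_sq_le h0 h1 A (fun S => F (insert a S) - F S)
    rw [Ex_sub] at j
    set x := Ex l A F
    set y := Ex l A (fun S => F (insert a S))
    have k0 := mul_le_mul_of_nonneg_left i0 (sub_nonneg.2 h1)
    have k1 := mul_le_mul_of_nonneg_left i1 h0
    have k2 : l * (1 - l) * (y - x) ^ 2 ≤ (y - x) ^ 2 := by
      have : l * (1 - l) ≤ 1 := by nlinarith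
      nlinarith [sq_nonneg (y - x)]
    nlinarith

/-- The logarithmic Sobolev inequality on two points. -/
lemma lsi_two_point {l : ℝ} (h0 : 0 ≤ l) (h1 : l ≤ 1) (x y : ℝ) :
    (1 - l) * (x ^ 2 * Real.log (x ^ 2)) + l * (y ^ 2 * Real.log (y ^ 2))
      - ((1 - l) * x ^ 2 + l * y ^ 2) * Real.log ((1 - l) * x ^ 2 + l * y ^ 2) ≤ (y - x) ^ 2 := by
  set M := (1 - l) * x ^ 2 + l * y ^ 2 with hM
  have hl : 0 ≤ 1 - l := sub_nonneg.2 h1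
  have hM0 : 0 ≤ M := by positivity
  rcases hM0.eq_or_lt with hM0 | hMpos
  · have a1 : (1 - l) * x ^ 2 = 0 := by nlinarith [mul_nonneg hl (sq_nonneg x), mul_nonneg h0 (sq_nonneg y)]
    have a2 : l * y ^ 2 = 0 := by nlinarith [mul_nonneg hl (sq_nonneg x), mul_nonneg h0 (sq_nonneg y)]
    rw [← mul_assoc, ← mul_assoc, a1, a2, ← hM0]
    simp only [zero_mul, add_zero, sub_zero]
    positivity
  -- `s log s ≤ s log M + s (s / M - 1)` at the two values of the squared function
  have key : ∀ s : ℝ, 0 ≤ s → s * Real.log s ≤ s * Real.log M + s * (s / M - 1) := by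
    intro s hs
    rcases hs.eq_or_lt with rfl | hs
    · simp
    have := Real.log_le_sub_one_of_pos (div_pos hs hMpos)
    rw [Real.log_div hs.ne' hMpos.ne'] at this
    nlinarith
  have k1 := mul_le_mul_of_nonneg_left (key (x ^ 2) (by positivity)) hl
  have k2 := mul_le_mul_of_nonneg_left (key (y ^ 2) (by positivity)) h0
  have k3 : (1 - l) * (x ^ 2 * (x ^ 2 / M - 1)) + l * (y ^ 2 * (y ^ 2 / M - 1))
      = l * (1 - l) * (y + x) ^ 2 * (y - x) ^ 2 / M := by
    field_simp
    rw [hM]; ring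
  have k4 : l * (1 - l) * (y + x) ^ 2 * (y - x) ^ 2 / M ≤ (y - x) ^ 2 := by
    rw [div_le_iff₀ hMpos, mul_comm ((y - x) ^ 2)]
    refine mul_le_mul_of_nonneg_right ?_ (sq_nonneg _)
    rw [hM]
    nlinarith [sq_nonneg (l * y - (1 - l) * x)]
  nlinarith

/-- The logarithmic Sobolev inequality on the cube, with a constant that does not depend on the
bias. The two-point inequality tensorizes through the Cauchy–Schwarz inequality. -/
lemma lsi {l : ℝ} (h0 : 0 ≤ l) (h1 : l ≤ 1) (A : Finset ι) (F : Finset ι → ℝ) :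
    Ex l A (fun S => F S ^ 2 * Real.log (F S ^ 2))
      - Ex l A (fun S => F S ^ 2) * Real.log (Ex l A (fun S => F S ^ 2)) ≤ Dir l A F := by
  induction A using Finset.induction_on generalizing F with
  | empty => simp [Ex_empty, Dir]
  | insert a A ha ih =>
    rw [Dir_insert l ha, Ex_insert l ha, Ex_insert l ha]
    have i0 := ih F
    have i1 := ih (fun S => F (insert a S))
    have p0 : 0 ≤ Ex l A (fun S => F S ^ 2) := Ex_nonneg h0 h1 fun S _ => sq_nonneg _
    have p1 : 0 ≤ Ex l A (fun S => F (insert a S) ^ 2) := Ex_nonneg h0 h1 fun S _ => sq_nonneg _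
    have tp := lsi_two_point h0 h1 √(Ex l A (fun S => F S ^ 2))
      √(Ex l A (fun S => F (insert a S) ^ 2))
    have cs := Ex_mul_sq_le h0 h1 A F (fun S => F (insert a S))
    have ex : Ex l A (fun S => (F (insert a S) - F S) ^ 2) = Ex l A (fun S => F (insert a S) ^ 2)
        - 2 * Ex l A (fun S => F S * F (insert a S)) + Ex l A (fun S => F S ^ 2) := by
      rw [← Ex_mul, ← Ex_sub, ← Ex_add]
      exact Ex_congr fun S _ => by ring
    rw [ex]
    rw [Real.sq_sqrt p0, Real.sq_sqrt p1] at tp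
    have cs' : Ex l A (fun S => F S * F (insert a S))
        ≤ √(Ex l A (fun S => F S ^ 2)) * √(Ex l A (fun S => F (insert a S) ^ 2)) := by
      rw [← Real.sqrt_mul p0]
      exact Real.le_sqrt_of_sq_le cs
    have k0 := mul_le_mul_of_nonneg_left i0 (sub_nonneg.2 h1)
    have k1 := mul_le_mul_of_nonneg_left i1 h0
    nlinarith [Real.sq_sqrt p0, Real.sq_sqrt p1]

/-- Entropy of a square is large when the function is much smaller in `L¹` than in `L²`. -/
lemma entropy_lower {l : ℝ} (h0 : 0 ≤ l) (h1 : l ≤ 1) (A : Finset ι) (F : Finset ι → ℝ) (a : ℝ) :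
    a * Ex l A (fun S => F S ^ 2) - (Ex l A (fun S => |F S|)) ^ 2 * Real.exp a ≤
      Ex l A (fun S => F S ^ 2 * Real.log (F S ^ 2))
      - Ex l A (fun S => F S ^ 2) * Real.log (Ex l A (fun S => F S ^ 2)) := by
  set v := Ex l A (fun S => F S ^ 2) with hv
  set u := Ex l A (fun S => |F S|) with hu
  have hv0 : 0 ≤ v := Ex_nonneg h0 h1 fun S _ => sq_nonneg _
  have hu0 : 0 ≤ u := Ex_nonneg h0 h1 fun S _ => abs_nonneg _
  have huv : u ^ 2 ≤ v := by
    have := Ex_sq_le h0 h1 A (fun S => |F S|)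
    simpa only [sq_abs] using this
  have key : ∀ c : ℝ, 0 < c → (2 * Real.log c + 2) * v - 2 * c * u ≤
      Ex l A (fun S => F S ^ 2 * Real.log (F S ^ 2)) := by
    intro c hc
    rw [hv, hu, ← Ex_mul, ← Ex_mul, ← Ex_sub]
    refine Ex_mono h0 h1 fun S _ => ?_
    rw [← sq_abs (F S)]
    rcases (abs_nonneg (F S)).eq_or_lt with h | h
    · rw [← h]; simp
    · have := Real.one_sub_inv_le_log_of_pos (div_pos h hc)
      rw [Real.log_div h.ne' hc.ne', inv_div] at this
      rw [Real.log_pow]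
      have h2 : |F S| ^ 2 * (1 - c / |F S|) ≤ |F S| ^ 2 * (Real.log |F S| - Real.log c) :=
        mul_le_mul_of_nonneg_left this (by positivity)
      have h3 : |F S| ^ 2 * (1 - c / |F S|) = |F S| ^ 2 - c * |F S| := by field_simp
      push_cast
      linarith
  rcases hv0.eq_or_lt with h | hvpos
  · have hu1 : u = 0 := by nlinarith
    have := key 1 one_pos
    rw [hu1, ← h] at this
    rw [hu1, ← h]
    simpa using this
  -- with this `c`, the term `2 log c` cancels `log v` and leaves the factor `a`
  have hs : 0 < √v := Real.sqrt_pos.2 hvpos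
  have := key (√v * Real.exp (a / 2)) (mul_pos hs (Real.exp_pos _))
  rw [Real.log_mul hs.ne' (Real.exp_pos _).ne', Real.log_exp, Real.log_sqrt hv0] at this
  have e : Real.exp (a / 2) ^ 2 = Real.exp a := by rw [← Real.exp_nat_mul]; congr 1; push_cast; ring
  rw [← e]
  nlinarith [sq_nonneg (√v - Real.exp (a / 2) * u), Real.sq_sqrt hv0]

/-- Centering of `F` in the direction `b`: `F - E_b F`. -/
noncomputable def cen (l : ℝ) (b : ι) (F : Finset ι → ℝ) (S : Finset ι) : ℝ :=
  (if b ∈ S then 1 - l else -l) * Dd b F S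

/-- Functional form of the Kahn–Kalai–Linial theorem, in the manner of
Falik–Samorodnitsky: the martingale differences of `F` are tested against the logarithmic Sobolev
inequality. -/
lemma kkl {l : ℝ} (h0 : 0 ≤ l) (h1 : l ≤ 1) (a u : ℝ) (A : Finset ι) (F : Finset ι → ℝ)
    (hF : ∀ i ∈ A, Ex l A (fun S => |Dd i F S|) ≤ u) :
    a * (Ex l A (fun S => F S ^ 2) - (Ex l A F) ^ 2) ≤ Dir l A F + #A * (u ^ 2 * Real.exp a) := by
  induction A using Finset.induction_on generalizing F with
  | empty => simp [Ex_empty, Dir]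
  | insert b A hb ih =>
    have hl : 0 ≤ 1 - l := sub_nonneg.2 h1
    set Fb : Finset ι → ℝ := fun S => (1 - l) * F S + l * F (insert b S) with hFb
    set G : Finset ι → ℝ := fun S => F (insert b S) - F S with hG
    have nb : ∀ S ⊆ A, b ∉ S := fun S hS h => hb (hS h)
    have c0 : ∀ S ⊆ A, cen l b F S = -l * G S := fun S hS => by
      simp [cen, nb S hS, Dd_of_notMem (nb S hS), hG]
    have c1 : ∀ S ⊆ A, cen l b F (insert b S) = (1 - l) * G S := fun S hS => by
      simp [cen, Dd_self_insert, Dd_of_notMem (nb S hS), hG]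
    have dl : ∀ i ∈ A, ∀ S ⊆ A, Dd i (cen l b F) S = -l * Dd i G S := fun i hi S hS => by
      unfold Dd
      rw [c0 _ (Finset.insert_subset hi hS), c0 _ ((Finset.erase_subset _ _).trans hS)]; ring
    have dr : ∀ i ∈ A, ∀ S ⊆ A, Dd i (fun T => cen l b F (insert b T)) S = (1 - l) * Dd i G S :=
      fun i hi S hS => by
      simp only [Dd]
      rw [c1 _ (Finset.insert_subset hi hS), c1 _ ((Finset.erase_subset _ _).trans hS)]; ring
    -- the induction hypothesis applies to the average `Fb` over coordinate `b`
    have step := ih Fb (fun i hi => by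
      refine le_trans ?_ (hF i (Finset.mem_insert_of_mem hi))
      rw [Ex_insert_Dd l hb hi (fun x => |x|), ← Ex_mul, ← Ex_mul, ← Ex_add]
      refine Ex_mono h0 h1 fun S _ => ?_
      have : Dd i Fb S = (1 - l) * Dd i F S + l * Dd i (fun T => F (insert b T)) S := by
        simp only [Dd, hFb]; ring
      rw [this]
      refine (abs_add_le _ _).trans ?_
      rw [abs_mul, abs_mul, abs_of_nonneg hl, abs_of_nonneg h0])
    have ent := (entropy_lower h0 h1 (insert b A) (cen l b F) a).trans
      (lsi h0 h1 (insert b A) (cen l b F))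
    -- second moment, first moment and Dirichlet form of the centering
    have m2 : Ex l (insert b A) (fun S => cen l b F S ^ 2)
        = l * (1 - l) * Ex l A (fun S => G S ^ 2) := by
      rw [Ex_insert l hb, ← Ex_mul, ← Ex_mul, ← Ex_mul, ← Ex_add]
      exact Ex_congr fun S hS => by rw [c0 S hS, c1 S hS]; ring
    have m1 : Ex l (insert b A) (fun S => |cen l b F S|) ≤ u := by
      refine le_trans ?_ (hF b (Finset.mem_insert_self _ _))
      rw [Ex_insert_Dd_self l hb (fun x => |x|), Ex_insert l hb, ← Ex_mul, ← Ex_mul, ← Ex_add]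
      refine Ex_mono h0 h1 fun S hS => ?_
      rw [c0 S hS, c1 S hS, abs_mul, abs_mul, abs_neg, abs_of_nonneg hl, abs_of_nonneg h0]
      have : 0 ≤ |G S| := abs_nonneg _
      change _ ≤ |G S|
      nlinarith [mul_nonneg h0 hl, sq_nonneg (1 - 2 * l)]
    have m1' : 0 ≤ Ex l (insert b A) (fun S => |cen l b F S|) :=
      Ex_nonneg h0 h1 fun S _ => abs_nonneg _
    have md : Dir l (insert b A) (cen l b F)
        = Ex l A (fun S => G S ^ 2) + l * (1 - l) * Dir l A G := by
      rw [Dir_insert l hb]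
      congr 1
      · exact Ex_congr fun S hS => by rw [c0 S hS, c1 S hS]; ring
      · simp only [Dir, Finset.mul_sum]
        rw [← Finset.sum_add_distrib]
        refine Finset.sum_congr rfl fun i hi => ?_
        rw [← Ex_mul, ← Ex_mul, ← Ex_mul, ← Ex_add]
        exact Ex_congr fun S hS => by rw [dl i hi S hS, dr i hi S hS]; ring
    have mF : Dir l (insert b A) F
        = Ex l A (fun S => G S ^ 2) + (Dir l A Fb + l * (1 - l) * Dir l A G) := by
      rw [Dir_insert l hb]
      congr 1
      simp only [Dir, Finset.mul_sum]
      rw [← Finset.sum_add_distrib, ← Finset.sum_add_distrib]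
      refine Finset.sum_congr rfl fun i hi => ?_
      rw [← Ex_mul, ← Ex_mul, ← Ex_mul, ← Ex_add, ← Ex_add]
      exact Ex_congr fun S hS => by simp only [Dd, hFb, hG]; ring
    have v1 : Ex l (insert b A) F = Ex l A Fb := by
      rw [Ex_insert l hb, ← Ex_mul, ← Ex_mul, ← Ex_add]
    have v2 : Ex l (insert b A) (fun S => F S ^ 2)
        = Ex l A (fun S => Fb S ^ 2) + l * (1 - l) * Ex l A (fun S => G S ^ 2) := by
      rw [Ex_insert l hb, ← Ex_mul, ← Ex_mul, ← Ex_mul, ← Ex_add, ← Ex_add]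
      exact Ex_congr fun S hS => by simp only [hFb, hG]; ring
    have hsq : Ex l (insert b A) (fun S => |cen l b F S|) ^ 2 * Real.exp a
        ≤ u ^ 2 * Real.exp a :=
      mul_le_mul_of_nonneg_right (pow_le_pow_left₀ m1' m1 2) (Real.exp_pos a).le
    rw [m2, md] at ent
    rw [v1, v2, mF, Finset.card_insert_of_notMem hb]
    push_cast
    linarith

end Cube

/-! ### Rank and nullity -/

section Rank
set_option linter.unusedSectionVars false
variable {ι : Type} [Fintype ι]

lemma finrank_map_add_inf_ker {V W : Type} [AddCommGroup V] [Module (ZMod 2) V]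
    [FiniteDimensional (ZMod 2) V] [AddCommGroup W] [Module (ZMod 2) W]
    (P : Submodule (ZMod 2) V) (f : V →ₗ[ZMod 2] W) :
    Module.finrank (ZMod 2) (P.map f) + Module.finrank (ZMod 2) ↥(P ⊓ LinearMap.ker f)
      = Module.finrank (ZMod 2) P := by
  have h := LinearMap.finrank_range_add_finrank_ker (f.domRestrict P)
  rw [LinearMap.range_domRestrict] at h
  have h2 : (LinearMap.ker (f.domRestrict P)).map P.subtype = P ⊓ LinearMap.ker f := by
    ext x
    simp only [Submodule.mem_map, LinearMap.mem_ker, Submodule.mem_inf]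
    constructor
    · rintro ⟨y, hy, rfl⟩
      exact ⟨y.2, hy⟩
    · rintro ⟨hx, hy⟩
      exact ⟨⟨x, hx⟩, hy, rfl⟩
  rw [← h2, Submodule.finrank_map_subtype_eq]
  exact h

/-- Codewords of `C` that vanish on `S`. -/
def vanishing (C : Submodule (ZMod 2) (ι → ZMod 2)) (S : Finset ι) :
    Submodule (ZMod 2) (ι → ZMod 2) :=
  C ⊓ LinearMap.ker (LinearMap.funLeft (ZMod 2) (ZMod 2) (Subtype.val : {i // i ∈ S} → ι))

lemma mem_vanishing {C : Submodule (ZMod 2) (ι → ZMod 2)} {S : Finset ι} {x : ι → ZMod 2} :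
    x ∈ vanishing C S ↔ x ∈ C ∧ ∀ j ∈ S, x j = 0 := by
  simp only [vanishing, Submodule.mem_inf, LinearMap.mem_ker, funext_iff, LinearMap.funLeft_apply,
    Subtype.forall, Pi.zero_apply]

lemma rankC_add (C : Submodule (ZMod 2) (ι → ZMod 2)) (S : Finset ι) :
    rankC C S + Module.finrank (ZMod 2) (vanishing C S) = Module.finrank (ZMod 2) C :=
  finrank_map_add_inf_ker C _

variable [DecidableEq ι]

open scoped Classical in
/-- Adding the coordinate `i` to `S` increases the rank iff some codeword separates `i` from `S`. -/
lemma rankC_insert (C : Submodule (ZMod 2) (ι → ZMod 2)) (S : Finset ι) (i : ι) :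
    rankC C (insert i S) = rankC C S +
      if ∃ x ∈ C, (∀ j ∈ S, x j = 0) ∧ x i ≠ 0 then 1 else 0 := by
  have h1 := rankC_add C S
  have h2 := rankC_add C (insert i S)
  have h3 := finrank_map_add_inf_ker (vanishing C S) (LinearMap.proj i : (ι → ZMod 2) →ₗ[ZMod 2] ZMod 2)
  have h4 : vanishing C S ⊓ LinearMap.ker (LinearMap.proj i : (ι → ZMod 2) →ₗ[ZMod 2] ZMod 2)
      = vanishing C (insert i S) := by
    ext x
    simp only [Submodule.mem_inf, mem_vanishing, LinearMap.mem_ker, LinearMap.proj_apply,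
      Finset.forall_mem_insert]
    tauto
  rw [h4] at h3
  split_ifs with h
  · obtain ⟨x, hx, hS, hi⟩ := h
    have : (vanishing C S).map (LinearMap.proj i : (ι → ZMod 2) →ₗ[ZMod 2] ZMod 2) = ⊤ := by
      rw [eq_top_iff]
      intro c _
      refine ⟨(c * (x i)⁻¹) • x, Submodule.smul_mem _ _ (mem_vanishing.2 ⟨hx, hS⟩), ?_⟩
      simp [hi]
    rw [this, finrank_top, Module.finrank_self] at h3
    omega
  · have : (vanishing C S).map (LinearMap.proj i : (ι → ZMod 2) →ₗ[ZMod 2] ZMod 2) = ⊥ := by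
      rw [eq_bot_iff]
      rintro _ ⟨x, hx, rfl⟩
      rw [Submodule.mem_bot]
      by_contra hne
      exact h ⟨x, (mem_vanishing.1 hx).1, (mem_vanishing.1 hx).2, hne⟩
    rw [this, finrank_bot] at h3
    omega

lemma rankC_empty (C : Submodule (ZMod 2) (ι → ZMod 2)) : rankC C ∅ = 0 := by
  have h1 := rankC_add C ∅
  have : vanishing C ∅ = C := by ext x; simp [mem_vanishing]
  rw [this] at h1
  omega

lemma rankC_univ (C : Submodule (ZMod 2) (ι → ZMod 2)) :
    rankC C univ = Module.finrank (ZMod 2) C := by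
  have h1 := rankC_add C univ
  have : vanishing C univ = ⊥ := by
    ext x
    simp only [mem_vanishing, Finset.mem_univ, forall_const, Submodule.mem_bot]
    exact ⟨fun h => funext h.2, fun h => by subst h; exact ⟨zero_mem _, fun _ => rfl⟩⟩
  rw [this, finrank_bot] at h1
  omega

lemma fC_empty (C : Submodule (ZMod 2) (ι → ZMod 2)) : fC C ∅ = 0 := by
  simp [fC, rankC_empty]

open scoped Classical in
lemma fC_insert (C : Submodule (ZMod 2) (ι → ZMod 2)) {S : Finset ι} {i : ι} (hi : i ∉ S) :
    fC C (insert i S) = fC C S + if ∃ x ∈ C, (∀ j ∈ S, x j = 0) ∧ x i ≠ 0 then 0 else 1 := by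
  unfold fC
  rw [rankC_insert, Finset.card_insert_of_notMem hi]
  split_ifs <;> (push_cast; ring)

open scoped Classical in
/-- The derivative `D_i f_C(S)` indicates that `i` is determined by the coordinates in `S \ {i}`. -/
lemma Dd_fC (C : Submodule (ZMod 2) (ι → ZMod 2)) (S : Finset ι) (i : ι) :
    Dd i (fC C) S = if ∃ x ∈ C, (∀ j ∈ S.erase i, x j = 0) ∧ x i ≠ 0 then 0 else 1 := by
  unfold Dd
  have := fC_insert C (Finset.notMem_erase i S)
  rw [show insert i (S.erase i) = insert i S by ext; simp; tauto] at this
  rw [this]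
  ring

lemma Dd_fC_zero_or_one (C : Submodule (ZMod 2) (ι → ZMod 2)) (S : Finset ι) (i : ι) :
    Dd i (fC C) S = 0 ∨ Dd i (fC C) S = 1 := by
  classical
  rw [Dd_fC]
  split_ifs <;> simp

lemma Dd_fC_mono (C : Submodule (ZMod 2) (ι → ZMod 2)) {S T : Finset ι} (h : S ⊆ T) (i : ι) :
    Dd i (fC C) S ≤ Dd i (fC C) T := by
  classical
  rw [Dd_fC, Dd_fC]
  split_ifs with h1 h2 h2
  · exact le_rfl
  · exact zero_le_one
  · obtain ⟨x, hx, hT, hi⟩ := h2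
    exact absurd ⟨x, hx, fun j hj => hT j (Finset.erase_subset_erase i h hj), hi⟩ h1
  · exact le_rfl

lemma fC_mono (C : Submodule (ZMod 2) (ι → ZMod 2)) {S T : Finset ι} (h : S ⊆ T) :
    fC C S ≤ fC C T := by
  classical
  induction T using Finset.induction_on generalizing S with
  | empty => rw [Finset.subset_empty.1 h]
  | insert a T ha ih =>
    have h2 : fC C T ≤ fC C (insert a T) := by
      rw [fC_insert C ha]; split_ifs <;> simp
    by_cases haS : a ∈ S
    · obtain ⟨S', ha', rfl⟩ : ∃ S', a ∉ S' ∧ insert a S' = S :=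
        ⟨S.erase a, Finset.notMem_erase a S, Finset.insert_erase haS⟩
      have hS' : S' ⊆ T := by
        intro j hj
        have := h (Finset.mem_insert_of_mem hj)
        rcases Finset.mem_insert.1 this with rfl | h'
        · exact absurd hj ha'
        · exact h'
      have h3 := ih hS'
      have h4 := Dd_fC_mono C hS' a
      rw [Dd_of_notMem ha', Dd_of_notMem ha] at h4
      linarith
    · exact (ih ((Finset.subset_insert_iff_of_notMem haS).1 h)).trans h2

lemma fC_nonneg (C : Submodule (ZMod 2) (ι → ZMod 2)) (S : Finset ι) : 0 ≤ fC C S := by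
  rw [← fC_empty C]
  exact fC_mono C (Finset.empty_subset S)

/-- The elements of `S` that are determined by the other elements of `S`; this is the union of the
supports of all dual codewords supported in `S`. -/
noncomputable def circ (C : Submodule (ZMod 2) (ι → ZMod 2)) (S : Finset ι) : Finset ι := by
  classical
  exact S.filter fun i => Dd i (fC C) S = 1

lemma circ_subset (C : Submodule (ZMod 2) (ι → ZMod 2)) (S : Finset ι) : circ C S ⊆ S :=
  Finset.filter_subset _ _

/-- Discarding elements that are not determined by the others does not change `f_C`. -/
lemma fC_circ (C : Submodule (ZMod 2) (ι → ZMod 2)) (S : Finset ι) :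
    fC C (circ C S) = fC C S := by
  classical
  have key : ∀ T : Finset ι, T ⊆ S \ circ C S → fC C (circ C S ∪ T) = fC C (circ C S) := by
    intro T
    induction T using Finset.induction_on with
    | empty => simp
    | insert a T ha ih =>
      intro hT
      have haS := hT (Finset.mem_insert_self a T)
      have hTS := (Finset.subset_insert a T).trans hT
      rw [Finset.mem_sdiff] at haS
      have h0 : Dd a (fC C) S = 0 := by
        rcases Dd_fC_zero_or_one C S a with h | h
        · exact h
        · exact absurd (Finset.mem_filter.2 ⟨haS.1, h⟩) haS.2
      have hsub : circ C S ∪ T ⊆ S :=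
        Finset.union_subset (circ_subset C S) (hTS.trans Finset.sdiff_subset)
      have h1 := Dd_fC_mono C hsub a
      have hna : a ∉ circ C S ∪ T := by
        rw [Finset.mem_union]; tauto
      have h2 := fC_mono C (Finset.subset_insert a (circ C S ∪ T))
      rw [Dd_of_notMem hna, h0] at h1
      rw [Finset.union_insert, ← ih hTS]
      linarith
  have := key _ subset_rfl
  rw [Finset.union_sdiff_of_subset (circ_subset C S)] at this
  exact this.symm

lemma card_circ_le (C : Submodule (ZMod 2) (ι → ZMod 2)) (S : Finset ι) :
    (#(circ C S) : ℝ) ≤ ∑ i, Dd i (fC C) S := by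
  classical
  have h : ∑ i ∈ circ C S, Dd i (fC C) S = #(circ C S) := by
    have h1 : ∀ i ∈ circ C S, Dd i (fC C) S = 1 := fun i hi => (Finset.mem_filter.1 hi).2
    rw [Finset.sum_congr rfl h1]
    simp
  rw [← h]
  refine Finset.sum_le_sum_of_subset_of_nonneg (Finset.subset_univ _) fun i _ _ => ?_
  rcases Dd_fC_zero_or_one C S i with h | h <;> simp [h]

lemma muC_eq (C : Submodule (ZMod 2) (ι → ZMod 2)) (l : ℝ) : muC C l = Ex l univ (fC C) := by
  simp [muC, Ex]

lemma Ex_zero (F : Finset ι → ℝ) (A : Finset ι) : Ex 0 A F = F ∅ := by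
  induction A using Finset.induction_on generalizing F with
  | empty => simp [Ex_empty]
  | insert a A ha ih => rw [Ex_insert 0 ha, ih]; ring

lemma Ex_one (F : Finset ι → ℝ) (A : Finset ι) : Ex 1 A F = F A := by
  induction A using Finset.induction_on generalizing F with
  | empty => simp [Ex_empty]
  | insert a A ha ih => rw [Ex_insert 1 ha, ih, ih]; ring

/-! ### Invariance under automorphisms of the code -/

lemma Ex_map (l : ℝ) (π : Equiv.Perm ι) (F : Finset ι → ℝ) :
    Ex l univ (fun S => F (S.map π.toEmbedding)) = Ex l univ F := by
  simp only [Ex, Finset.powerset_univ]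
  refine Fintype.sum_equiv (Equiv.finsetCongr π) _ _ fun S => ?_
  simp

lemma Dd_map (π : Equiv.Perm ι) (i : ι) (F : Finset ι → ℝ) (S : Finset ι) :
    Dd (π i) F (S.map π.toEmbedding) = Dd i (fun T => F (T.map π.toEmbedding)) S := by
  unfold Dd
  simp only [Finset.map_insert, Finset.map_erase, Equiv.coe_toEmbedding]

lemma fC_map {C : Submodule (ZMod 2) (ι → ZMod 2)} {π : Equiv.Perm ι} (h : PreservesCode C π)
    (S : Finset ι) : fC C (S.map π.toEmbedding) = fC C S := by
  classical
  induction S using Finset.induction_on with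
  | empty => simp
  | insert a S ha ih =>
    have ha' : π a ∉ S.map π.toEmbedding := by simpa using ha
    rw [Finset.map_insert, Equiv.coe_toEmbedding, fC_insert C ha', fC_insert C ha, ih]
    congr 2
    refine propext ⟨?_, ?_⟩
    · rintro ⟨x, hx, h1, h2⟩
      refine ⟨x ∘ π, (h x).1 hx, fun j hj => h1 _ ?_, h2⟩
      simpa using hj
    · rintro ⟨x, hx, h1, h2⟩
      refine ⟨x ∘ π.symm, ?_, fun j hj => ?_, by simpa using h2⟩
      · rw [h]; simpa [Function.comp_assoc] using hx
      · rw [Finset.mem_map_equiv] at hj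
        exact h1 _ hj

/-- The EXIT function at the coordinate `i`: the probability that `i` is determined by the other
coordinates in a random set of density `l`. -/
noncomputable def exitAt (C : Submodule (ZMod 2) (ι → ZMod 2)) (i : ι) (l : ℝ) : ℝ :=
  Ex l univ (Dd i (fC C))

/-- The influence of the coordinate `j` on the EXIT function at `i`. -/
noncomputable def infl (C : Submodule (ZMod 2) (ι → ZMod 2)) (i j : ι) (l : ℝ) : ℝ :=
  Ex l univ (Dd j (Dd i (fC C)))

lemma infl_perm {C : Submodule (ZMod 2) (ι → ZMod 2)} {π : Equiv.Perm ι} (h : PreservesCode C π)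
    (i j : ι) (l : ℝ) : infl C (π i) (π j) l = infl C i j l := by
  unfold infl
  rw [← Ex_map l π]
  simp only [Dd_map, fC_map h]

lemma exitAt_perm {C : Submodule (ZMod 2) (ι → ZMod 2)} {π : Equiv.Perm ι} (h : PreservesCode C π)
    (i : ι) (l : ℝ) : exitAt C (π i) l = exitAt C i l := by
  unfold exitAt
  rw [← Ex_map l π]
  simp only [Dd_map, fC_map h]

lemma exitAt_eq {C : Submodule (ZMod 2) (ι → ZMod 2)} (h : DoublyTransitive C) (i j : ι) (l : ℝ) :
    exitAt C i l = exitAt C j l := by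
  by_cases hij : i = j
  · rw [hij]
  obtain ⟨π, hπ, h1, -⟩ := h j i i j (Ne.symm hij) hij
  rw [← h1, exitAt_perm hπ]

lemma infl_eq {C : Submodule (ZMod 2) (ι → ZMod 2)} (h : DoublyTransitive C) {i j j' : ι}
    (hj : i ≠ j) (hj' : i ≠ j') (l : ℝ) : infl C i j l = infl C i j' l := by
  obtain ⟨π, hπ, h1, h2⟩ := h i j i j' hj hj'
  rw [← h2]
  conv_rhs => rw [← h1]
  exact (infl_perm hπ i j l).symm

end Rank

/-! ### Automorphisms of Reed-Muller codes -/

section ReedMullerFacts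

lemma mem_RM {m d : ℕ} {x : (Fin m → ZMod 2) → ZMod 2} :
    x ∈ ReedMuller m d ↔ ∃ p : MvPolynomial (Fin m) (ZMod 2), p.totalDegree ≤ d ∧
      ∀ v, x v = MvPolynomial.eval v p := by
  unfold ReedMuller
  rw [Submodule.mem_map]
  constructor
  · rintro ⟨p, hp, rfl⟩
    refine ⟨p, (MvPolynomial.mem_restrictTotalDegree _ _ _).1 hp, fun v => ?_⟩
    simp
  · rintro ⟨p, hp, h⟩
    refine ⟨p, (MvPolynomial.mem_restrictTotalDegree _ _ _).2 hp, ?_⟩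
    funext v
    rw [h v]
    simp

/-- Substituting polynomials of degree at most one does not raise the total degree. -/
lemma totalDegree_bind₁_le {m n : ℕ} (q : Fin m → MvPolynomial (Fin n) (ZMod 2))
    (hq : ∀ i, (q i).totalDegree ≤ 1) (p : MvPolynomial (Fin m) (ZMod 2)) :
    (MvPolynomial.bind₁ q p).totalDegree ≤ p.totalDegree := by
  rw [MvPolynomial.bind₁, MvPolynomial.aeval_def, MvPolynomial.eval₂_eq']
  refine MvPolynomial.totalDegree_finsetSum_le fun s hs => ?_
  refine (MvPolynomial.totalDegree_mul _ _).trans ?_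
  rw [MvPolynomial.algebraMap_eq, MvPolynomial.totalDegree_C, zero_add]
  refine (MvPolynomial.totalDegree_finsetProd _ _).trans ?_
  refine le_trans ?_ (MvPolynomial.le_totalDegree hs)
  rw [Finsupp.sum_fintype _ _ (by simp)]
  refine Finset.sum_le_sum fun i _ => ?_
  refine (MvPolynomial.totalDegree_pow _ _).trans ?_
  nlinarith [hq i]

/-- A permutation of `F_2^m` that equals its own inverse and has affine coordinate functions
preserves every Reed-Muller code. -/
lemma preserves_of_affine {m d : ℕ} (π : Equiv.Perm (Fin m → ZMod 2)) (hπ : ∀ v, π (π v) = v)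
    (q : Fin m → MvPolynomial (Fin m) (ZMod 2)) (hq : ∀ i, (q i).totalDegree ≤ 1)
    (hqπ : ∀ v i, π v i = MvPolynomial.eval v (q i)) :
    PreservesCode (ReedMuller m d) π := by
  have key : ∀ x, x ∈ ReedMuller m d → x ∘ π ∈ ReedMuller m d := by
    intro x hx
    obtain ⟨p, hp, h⟩ := mem_RM.1 hx
    refine mem_RM.2 ⟨MvPolynomial.bind₁ q p, (totalDegree_bind₁_le q hq p).trans hp, fun v => ?_⟩
    rw [Function.comp, h, show π v = fun i => MvPolynomial.eval v (q i) from funext (hqπ v)]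
    exact (MvPolynomial.eval₂Hom_bind₁ (RingHom.id _) v q p).symm
  intro x
  refine ⟨key x, fun h => ?_⟩
  have := key _ h
  rwa [show (x ∘ π) ∘ π = x by funext v; simp [hπ]] at this

lemma preserves_comp {m d : ℕ} {π σ : Equiv.Perm (Fin m → ZMod 2)}
    (hπ : PreservesCode (ReedMuller m d) π) (hσ : PreservesCode (ReedMuller m d) σ) :
    PreservesCode (ReedMuller m d) (σ.trans π) := by
  intro x
  rw [hπ x, hσ (x ∘ π)]
  rfl

lemma zmod2_add_self (a : ZMod 2) : a + a = 0 := CharTwo.add_self_eq_zero a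

/-- Translation of `F_2^m`. -/
def transl {m : ℕ} (b : Fin m → ZMod 2) : Equiv.Perm (Fin m → ZMod 2) where
  toFun v := v + b
  invFun v := v + b
  left_inv v := by funext i; simp [add_assoc, zmod2_add_self]
  right_inv v := by funext i; simp [add_assoc, zmod2_add_self]

lemma transl_preserves {m d : ℕ} (b : Fin m → ZMod 2) :
    PreservesCode (ReedMuller m d) (transl b) := by
  refine preserves_of_affine _ (transl b).left_inv
    (fun i => MvPolynomial.X i + MvPolynomial.C (b i)) (fun i => ?_) fun v i => ?_
  · refine (MvPolynomial.totalDegree_add _ _).trans ?_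
    simp
  · simp [transl]

/-- The transvection `v ↦ v + (∑_{i ∈ T} v i) • b`, an involution when `∑_{i ∈ T} b i = 0`. -/
def transvec {m : ℕ} (T : Finset (Fin m)) (b : Fin m → ZMod 2) (hb : ∑ i ∈ T, b i = 0) :
    Equiv.Perm (Fin m → ZMod 2) where
  toFun v := fun j => v j + (∑ i ∈ T, v i) * b j
  invFun v := fun j => v j + (∑ i ∈ T, v i) * b j
  left_inv v := by
    funext j
    simp only [Finset.sum_add_distrib, ← Finset.mul_sum, hb, mul_zero, add_zero, add_assoc,
      zmod2_add_self]
  right_inv v := by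
    funext j
    simp only [Finset.sum_add_distrib, ← Finset.mul_sum, hb, mul_zero, add_zero, add_assoc,
      zmod2_add_self]

lemma transvec_preserves {m d : ℕ} (T : Finset (Fin m)) (b : Fin m → ZMod 2)
    (hb : ∑ i ∈ T, b i = 0) : PreservesCode (ReedMuller m d) (transvec T b hb) := by
  refine preserves_of_affine _ (transvec T b hb).left_inv
    (fun j => MvPolynomial.X j + (∑ i ∈ T, MvPolynomial.X i) * MvPolynomial.C (b j))
    (fun j => ?_) fun v j => ?_
  · refine (MvPolynomial.totalDegree_add _ _).trans (max_le (by simp) ?_)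
    refine (MvPolynomial.totalDegree_mul _ _).trans ?_
    rw [MvPolynomial.totalDegree_C, add_zero]
    exact MvPolynomial.totalDegree_finsetSum_le fun i _ => by simp
  · simp [transvec, map_sum]

lemma zmod2_ne_zero {a : ZMod 2} (h : a ≠ 0) : a = 1 := by
  revert a; decide

/-- Two nonzero vectors of `F_2^m` are both mapped to `1` by some linear functional. -/
lemma exists_functional {m : ℕ} {u w : Fin m → ZMod 2} (hu : u ≠ 0) (hw : w ≠ 0) :
    ∃ T : Finset (Fin m), ∑ i ∈ T, u i = 1 ∧ ∑ i ∈ T, w i = 1 := by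
  by_cases h : ∃ a, u a ≠ 0 ∧ w a ≠ 0
  · obtain ⟨a, h1, h2⟩ := h
    exact ⟨{a}, by simp [zmod2_ne_zero h1], by simp [zmod2_ne_zero h2]⟩
  · push Not at h
    obtain ⟨a, ha⟩ := Function.ne_iff.1 hu
    obtain ⟨b, hb⟩ := Function.ne_iff.1 hw
    have hwa := h a ha
    have hub : u b = 0 := by
      by_contra h'
      exact hb (h b h')
    have hab : a ≠ b := by
      rintro rfl
      exact ha hub
    exact ⟨{a, b}, by simp [Finset.sum_pair hab, hub, zmod2_ne_zero ha],
      by simp [Finset.sum_pair hab, hwa, zmod2_ne_zero hb]⟩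

lemma RM_doublyTransitive (m d : ℕ) : DoublyTransitive (ReedMuller m d) := by
  intro i₁ j₁ i₂ j₂ h1 h2
  have add_ne : ∀ {a b : Fin m → ZMod 2}, a ≠ b → b + a ≠ 0 := by
    intro a b h h'
    apply h
    funext i
    have := congrFun h' i
    simp only [Pi.add_apply, Pi.zero_apply] at this
    calc a i = (b i + a i) + b i := by
          rw [add_comm (b i), add_assoc, zmod2_add_self, add_zero]
      _ = b i := by rw [this, zero_add]
  obtain ⟨T, hTu, hTw⟩ := exists_functional (add_ne h1) (add_ne h2)
  have hb : ∑ i ∈ T, ((j₁ + i₁) + (j₂ + i₂)) i = 0 := by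
    simp only [Pi.add_apply] at hTu hTw ⊢
    rw [Finset.sum_add_distrib, hTu, hTw]
    exact zmod2_add_self 1
  refine ⟨((transl i₁).trans (transvec T _ hb)).trans (transl i₂),
    preserves_comp (transl_preserves _) (preserves_comp (transvec_preserves _ _ _)
      (transl_preserves _)), ?_, ?_⟩
  · funext j
    simp [transl, transvec, zmod2_add_self]
  · funext j
    have e : ∑ i ∈ T, (j₁ i + i₁ i) = 1 := hTu
    simp only [transl, transvec, Equiv.trans_apply, Equiv.coe_fn_mk, Pi.add_apply, e, one_mul]
    linear_combination (i₁ j + j₁ j + i₂ j) * (CharTwo.two_eq_zero : (2 : ZMod 2) = 0)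

end ReedMullerFacts

/-! ### The nullity bound -/

section Nullity

/-- The evaluation code of the polynomials of degree strictly less than `e`. -/
noncomputable def RMlt (m : ℕ) : ℕ → Submodule (ZMod 2) ((Fin m → ZMod 2) → ZMod 2)
  | 0 => ⊥
  | e + 1 => ReedMuller m e

lemma RMlt_tail {m e : ℕ} {f : (Fin m → ZMod 2) → ZMod 2} (hf : f ∈ RMlt m (e + 1)) :
    (fun v => f (Fin.tail v)) ∈ RMlt (m + 1) (e + 1) := by
  obtain ⟨p, hp, h⟩ := mem_RM.1 hf
  refine mem_RM.2 ⟨MvPolynomial.rename Fin.succ p,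
    (MvPolynomial.totalDegree_rename_le _ _).trans hp, fun v => ?_⟩
  rw [MvPolynomial.eval_rename, h]
  rfl

lemma RMlt_mul {m e : ℕ} {g : (Fin m → ZMod 2) → ZMod 2} (hg : g ∈ RMlt m e) :
    (fun v => v 0 * g (Fin.tail v)) ∈ RMlt (m + 1) (e + 1) := by
  cases e with
  | zero =>
    have : g = 0 := by simpa [RMlt] using hg
    subst this
    convert Submodule.zero_mem _
    simp
  | succ e =>
    obtain ⟨p, hp, h⟩ := mem_RM.1 hg
    refine mem_RM.2 ⟨MvPolynomial.X 0 * MvPolynomial.rename Fin.succ p, ?_, fun v => ?_⟩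
    · refine (MvPolynomial.totalDegree_mul _ _).trans ?_
      have := (MvPolynomial.totalDegree_rename_le Fin.succ p).trans hp
      rw [MvPolynomial.totalDegree_X]
      omega
    · rw [map_mul, MvPolynomial.eval_rename, MvPolynomial.eval_X, h]
      rfl

/-- The slice of `A ⊆ F_2^(m+1)` where the first coordinate is `a`. -/
def cubeSlice {m : ℕ} (a : ZMod 2) (A : Finset (Fin (m + 1) → ZMod 2)) : Finset (Fin m → ZMod 2) :=
  univ.filter fun y => (Fin.cons a y : Fin (m + 1) → ZMod 2) ∈ A

lemma mem_cubeSlice {m : ℕ} {a : ZMod 2} {A : Finset (Fin (m + 1) → ZMod 2)} {y : Fin m → ZMod 2} :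
    y ∈ cubeSlice a A ↔ (Fin.cons a y : Fin (m + 1) → ZMod 2) ∈ A := by
  simp [cubeSlice]

lemma zmod2_cases (a : ZMod 2) : a = 0 ∨ a = 1 := by
  revert a; decide

lemma tail_mem_slices {m : ℕ} {A : Finset (Fin (m + 1) → ZMod 2)} {v : Fin (m + 1) → ZMod 2}
    (hv : v ∈ A) : Fin.tail v ∈ cubeSlice 0 A ∪ cubeSlice 1 A := by
  rw [Finset.mem_union, mem_cubeSlice, mem_cubeSlice]
  rcases zmod2_cases (v 0) with h | h
  · left; rw [← h, Fin.cons_self_tail]; exact hv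
  · right; rw [← h, Fin.cons_self_tail]; exact hv

lemma card_slices {m : ℕ} (A : Finset (Fin (m + 1) → ZMod 2)) :
    #(cubeSlice 0 A ∪ cubeSlice 1 A) + #(cubeSlice 0 A ∩ cubeSlice 1 A) = #A := by
  rw [Finset.card_union_add_card_inter,
    ← Finset.card_filter_add_card_filter_not (s := A) (fun v => v 0 = 0)]
  have key : ∀ a : ZMod 2, #(cubeSlice a A) = #(A.filter fun v => v 0 = a) := by
    intro a
    refine Finset.card_nbij (fun y => Fin.cons a y) ?_ ?_ ?_
    · intro y hy
      simpa [mem_cubeSlice] using hy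
    · intro y _ z _ h
      exact (Fin.cons_injective2 (α := fun _ => ZMod 2) h).2
    · intro v hv
      have hv := Finset.mem_filter.1 (Finset.mem_coe.1 hv)
      refine ⟨Fin.tail v, ?_, ?_⟩
      · rw [Finset.mem_coe, mem_cubeSlice, ← hv.2, Fin.cons_self_tail]
        exact hv.1
      · simp [← hv.2, Fin.cons_self_tail]
  rw [key, key]
  congr 2
  ext v
  rcases zmod2_cases (v 0) with h | h <;> simp [h]

/-- The `(u, u + v)` decomposition: a lower bound for the rank of a code containing all
`f(tail v) + v 0 * g(tail v)` with `f ∈ U`, `g ∈ V`. -/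
lemma rank_plotkin {m : ℕ} (C : Submodule (ZMod 2) ((Fin (m + 1) → ZMod 2) → ZMod 2))
    (U V : Submodule (ZMod 2) ((Fin m → ZMod 2) → ZMod 2))
    (hU : ∀ f ∈ U, (fun v => f (Fin.tail v)) ∈ C)
    (hV : ∀ g ∈ V, (fun v => v 0 * g (Fin.tail v)) ∈ C)
    (A : Finset (Fin (m + 1) → ZMod 2)) :
    rankC U (cubeSlice 0 A ∪ cubeSlice 1 A) + rankC V (cubeSlice 0 A ∩ cubeSlice 1 A) ≤ rankC C A := by
  -- The difference of the two slices, on the points where both are present.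
  let T : ({a // a ∈ A} → ZMod 2) →ₗ[ZMod 2] ({y // y ∈ cubeSlice 0 A ∩ cubeSlice 1 A} → ZMod 2) :=
    LinearMap.funLeft (ZMod 2) (ZMod 2)
        (fun y => ⟨Fin.cons 1 y.1, mem_cubeSlice.1 (Finset.mem_inter.1 y.2).2⟩)
      - LinearMap.funLeft (ZMod 2) (ZMod 2)
        (fun y => ⟨Fin.cons 0 y.1, mem_cubeSlice.1 (Finset.mem_inter.1 y.2).1⟩)
  let J : ({y // y ∈ cubeSlice 0 A ∪ cubeSlice 1 A} → ZMod 2) →ₗ[ZMod 2] ({a // a ∈ A} → ZMod 2) :=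
    LinearMap.funLeft (ZMod 2) (ZMod 2) (fun a => ⟨Fin.tail a.1, tail_mem_slices a.2⟩)
  have hJ : Function.Injective J := by
    refine LinearMap.funLeft_injective_of_surjective _ _ _ ?_
    rintro ⟨y, hy⟩
    rcases Finset.mem_union.1 hy with h | h
    · exact ⟨⟨_, mem_cubeSlice.1 h⟩, by simp⟩
    · exact ⟨⟨_, mem_cubeSlice.1 h⟩, by simp⟩
  unfold rankC
  rw [← finrank_map_add_inf_ker (C.map _) T, add_comm]
  refine add_le_add (Submodule.finrank_mono ?_) ?_
  · rintro _ ⟨g, hg, rfl⟩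
    refine ⟨_, ⟨_, hV g hg, rfl⟩, ?_⟩
    funext y
    simp [T, LinearMap.funLeft_apply]
  · rw [(Submodule.equivMapOfInjective J hJ _).finrank_eq]
    refine Submodule.finrank_mono ?_
    rintro _ ⟨_, ⟨f, hf, rfl⟩, rfl⟩
    refine ⟨⟨_, hU f hf, ?_⟩, ?_⟩
    · funext a
      simp [J, LinearMap.funLeft_apply]
    · rw [SetLike.mem_coe, LinearMap.mem_ker]
      funext y
      simp [J, T, LinearMap.funLeft_apply]

lemma rpow_plotkin {x y β : ℝ} (hy : 0 ≤ y) (hyx : y ≤ x) (hβ : 1 ≤ β) :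
    x ^ β + (2 ^ β - 1) * y ^ β ≤ (x + y) ^ β := by
  rcases hy.eq_or_lt with rfl | hy0
  · simp [Real.zero_rpow (by linarith : β ≠ 0)]
  have hx0 : 0 < x := by linarith
  have hc := convexOn_rpow hβ
  -- `x` and `2 y` are complementary convex combinations of `y` and `x + y`.
  have ht0 : 0 ≤ (x - y) / x := div_nonneg (by linarith) hx0.le
  have ht1 : 0 ≤ y / x := div_nonneg hy hx0.le
  have ht : (x - y) / x + y / x = 1 := by field_simp; ring
  have h1 := hc.2 (x := y) (y := x + y) (by simpa using hy)
    (by simp; linarith) ht1 ht0 (by rw [add_comm]; exact ht)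
  have h2 := hc.2 (x := y) (y := x + y) (by simpa using hy)
    (by simp; linarith) ht0 ht1 ht
  simp only [smul_eq_mul] at h1 h2
  rw [show y / x * y + (x - y) / x * (x + y) = x by field_simp; ring] at h1
  rw [show (x - y) / x * y + y / x * (x + y) = 2 * y by field_simp; ring,
    Real.mul_rpow (by norm_num) hy] at h2
  have e1 : y / x * y ^ β + (x - y) / x * y ^ β = y ^ β := by
    rw [← add_mul, add_comm, ht, one_mul]
  have e2 : y / x * (x + y) ^ β + (x - y) / x * (x + y) ^ β = (x + y) ^ β := by
    rw [← add_mul, add_comm, ht, one_mul]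
  linarith

/-- Small sets have small nullity with respect to Reed-Muller codes. -/
lemma nullity_bound {β : ℝ} (hβ : 1 ≤ β) (m e : ℕ) (A : Finset (Fin m → ZMod 2)) :
    fC (RMlt m e) A ≤ ((2 ^ β - 1 : ℝ)⁻¹) ^ e * (#A : ℝ) ^ β := by
  have hθ : (0 : ℝ) < 2 ^ β - 1 := by
    have := Real.one_lt_rpow (by norm_num : (1 : ℝ) < 2) (by linarith : 0 < β)
    linarith
  induction m generalizing e with
  | zero =>
    cases e with
    | zero =>
      rw [pow_zero, one_mul]
      have h0 : fC (RMlt 0 0) A ≤ #A := by unfold fC; simp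
      refine h0.trans ?_
      rcases Nat.eq_zero_or_pos (#A) with h | h
      · rw [h]; simp [Real.zero_rpow (by linarith : β ≠ 0)]
      · exact Real.self_le_rpow_of_one_le (by exact_mod_cast h) hβ
    | succ e =>
      have : fC (RMlt 0 (e + 1)) A = 0 := by
        rcases A.eq_empty_or_nonempty with rfl | ⟨a, ha⟩
        · exact fC_empty _
        · have hA : A = insert a ∅ := by
            ext b; simp [Subsingleton.elim b a, ha]
          rw [hA, fC_insert _ (Finset.notMem_empty a), fC_empty, if_pos]
          · simp
          · exact ⟨fun _ => 1, mem_RM.2 ⟨1, by simp, by simp⟩, by simp, by simp⟩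
      rw [this]
      positivity
  | succ m ih =>
    cases e with
    | zero =>
      rw [pow_zero, one_mul]
      have h0 : fC (RMlt (m + 1) 0) A ≤ #A := by unfold fC; simp
      refine h0.trans ?_
      rcases Nat.eq_zero_or_pos (#A) with h | h
      · rw [h]; simp [Real.zero_rpow (by linarith : β ≠ 0)]
      · exact Real.self_le_rpow_of_one_le (by exact_mod_cast h) hβ
    | succ e =>
      have hr := rank_plotkin (RMlt (m + 1) (e + 1)) (RMlt m (e + 1)) (RMlt m e)
        (fun f hf => RMlt_tail hf) (fun g hg => RMlt_mul hg) A
      have hc := card_slices A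
      have h1 := ih (e + 1) (cubeSlice 0 A ∪ cubeSlice 1 A)
      have h2 := ih e (cubeSlice 0 A ∩ cubeSlice 1 A)
      have hle : #(cubeSlice 0 A ∩ cubeSlice 1 A) ≤ #(cubeSlice 0 A ∪ cubeSlice 1 A) :=
        Finset.card_le_card (Finset.inter_subset_union)
      have hf : fC (RMlt (m + 1) (e + 1)) A ≤ fC (RMlt m (e + 1)) (cubeSlice 0 A ∪ cubeSlice 1 A)
          + fC (RMlt m e) (cubeSlice 0 A ∩ cubeSlice 1 A) := by
        unfold fC
        rw [← hc]
        have : ((rankC (RMlt m (e + 1)) (cubeSlice 0 A ∪ cubeSlice 1 A) : ℕ) : ℝ) +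
          (rankC (RMlt m e) (cubeSlice 0 A ∩ cubeSlice 1 A) : ℕ) ≤ (rankC (RMlt (m + 1) (e + 1)) A : ℕ) := by
          exact_mod_cast hr
        push_cast
        linarith
      have hp := rpow_plotkin (x := #(cubeSlice 0 A ∪ cubeSlice 1 A)) (y := #(cubeSlice 0 A ∩ cubeSlice 1 A))
        (Nat.cast_nonneg _) (by exact_mod_cast hle) hβ
      rw [← hc]
      push_cast
      set θ : ℝ := 2 ^ β - 1
      have hs : (θ⁻¹) ^ e = (θ⁻¹) ^ (e + 1) * θ := by
        rw [pow_succ, mul_assoc, inv_mul_cancel₀ hθ.ne', mul_one]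
      calc _ ≤ _ := hf
        _ ≤ _ := add_le_add h1 h2
        _ = (θ⁻¹) ^ (e + 1) * ((#(cubeSlice 0 A ∪ cubeSlice 1 A) : ℝ) ^ β
            + θ * (#(cubeSlice 0 A ∩ cubeSlice 1 A) : ℝ) ^ β) := by rw [hs]; ring
        _ ≤ _ := mul_le_mul_of_nonneg_left hp (by positivity)

end Nullity

/-! ### The dimension bound -/

section Dimension

/-- The squarefree monomial `∏_{i ∈ T} x_i` as a function on `F_2^m`. -/
def sqfreeMonomial {m : ℕ} (T : Finset (Fin m)) : (Fin m → ZMod 2) → ZMod 2 := fun v => ∏ i ∈ T, v i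

lemma RM_le_span (m d : ℕ) : ReedMuller m d ≤ Submodule.span (ZMod 2)
    (((univ.filter fun T : Finset (Fin m) => #T ≤ d).image sqfreeMonomial : Finset _) :
      Set ((Fin m → ZMod 2) → ZMod 2)) := by
  intro x hx
  obtain ⟨p, hp, h⟩ := mem_RM.1 hx
  have hx' : x = ∑ s ∈ p.support, p.coeff s • sqfreeMonomial s.support := by
    funext v
    rw [h v, MvPolynomial.eval_eq, Finset.sum_apply]
    refine Finset.sum_congr rfl fun s _ => ?_
    simp only [Pi.smul_apply, smul_eq_mul, sqfreeMonomial]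
    congr 1
    refine Finset.prod_congr rfl fun i hi => ?_
    have hi := Finsupp.mem_support_iff.1 hi
    rcases zmod2_cases (v i) with h | h <;> simp [h, hi]
  rw [hx']
  refine Submodule.sum_mem _ fun s hs => Submodule.smul_mem _ _ (Submodule.subset_span ?_)
  refine Finset.mem_coe.2 (Finset.mem_image_of_mem _ (Finset.mem_filter.2 ⟨Finset.mem_univ _, ?_⟩))
  have h1 := (MvPolynomial.le_totalDegree hs).trans hp
  refine le_trans ?_ h1
  rw [Finsupp.sum, Finset.card_eq_sum_ones]
  exact Finset.sum_le_sum fun i hi => Nat.one_le_iff_ne_zero.2 (Finsupp.mem_support_iff.1 hi)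

lemma RM_finrank_le (m d : ℕ) {θ : ℝ} (hθ : 1 ≤ θ) :
    (Module.finrank (ZMod 2) (ReedMuller m d) : ℝ) ≤ θ ^ d * (1 + θ⁻¹) ^ m := by
  have h1 : Module.finrank (ZMod 2) (ReedMuller m d) ≤
      #(univ.filter fun T : Finset (Fin m) => #T ≤ d) :=
    (Submodule.finrank_mono (RM_le_span m d)).trans
      ((finrank_span_finset_le_card _).trans Finset.card_image_le)
  have h2 : ((#(univ.filter fun T : Finset (Fin m) => #T ≤ d) : ℕ) : ℝ)
      ≤ ∑ T : Finset (Fin m), θ ^ d * (θ⁻¹) ^ #T := by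
    rw [Finset.card_eq_sum_ones]
    push_cast
    rw [Finset.sum_filter]
    refine Finset.sum_le_sum fun T _ => ?_
    split_ifs with hT
    · rw [inv_pow, ← div_eq_mul_inv, one_le_div (by positivity)]
      exact pow_le_pow_right₀ hθ hT
    · positivity
  refine (Nat.cast_le.2 h1).trans (h2.trans (le_of_eq ?_))
  rw [← Finset.mul_sum]
  congr 1
  have := Fin.sum_pow_mul_eq_add_pow (n := m) (θ⁻¹) 1
  simp only [one_pow, mul_one] at this
  rw [this, add_comm]

end Dimension

/-! ### Differential inequalities for the EXIT function and for `μ` -/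

section Calculus
set_option linter.unusedSectionVars false
variable {ι : Type} [Fintype ι] [DecidableEq ι]

lemma hasDerivAt_muC (C : Submodule (ZMod 2) (ι → ZMod 2)) (l : ℝ) :
    HasDerivAt (muC C) (∑ i, exitAt C i l) l := by
  have h := russo univ (fC C) l
  rwa [← show muC C = fun t => Ex t univ (fC C) from funext (muC_eq C)] at h

lemma hasDerivAt_exitAt (C : Submodule (ZMod 2) (ι → ZMod 2)) (i : ι) (l : ℝ) :
    HasDerivAt (exitAt C i) (∑ j, infl C i j l) l :=
  russo univ (Dd i (fC C)) l

lemma exitAt_nonneg (C : Submodule (ZMod 2) (ι → ZMod 2)) (i : ι) {l : ℝ} (h0 : 0 ≤ l)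
    (h1 : l ≤ 1) : 0 ≤ exitAt C i l :=
  Ex_nonneg h0 h1 fun S _ => by rcases Dd_fC_zero_or_one C S i with h | h <;> simp [h]

lemma exitAt_le_one (C : Submodule (ZMod 2) (ι → ZMod 2)) (i : ι) {l : ℝ} (h0 : 0 ≤ l)
    (h1 : l ≤ 1) : exitAt C i l ≤ 1 := by
  have := Ex_mono h0 h1 (A := univ) (F := Dd i (fC C)) (G := fun _ => 1)
    fun S _ => by rcases Dd_fC_zero_or_one C S i with h | h <;> simp [h]
  rwa [Ex_const] at this

lemma muC_nonneg (C : Submodule (ZMod 2) (ι → ZMod 2)) {l : ℝ} (h0 : 0 ≤ l)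
    (h1 : l ≤ 1) : 0 ≤ muC C l := by
  rw [muC_eq]
  exact Ex_nonneg h0 h1 fun S _ => fC_nonneg C S

lemma Dd_Dd_zero_or_one (C : Submodule (ZMod 2) (ι → ZMod 2)) (i j : ι) (S : Finset ι) :
    Dd j (Dd i (fC C)) S = 0 ∨ Dd j (Dd i (fC C)) S = 1 := by
  have hm : Dd i (fC C) (S.erase j) ≤ Dd i (fC C) (insert j S) :=
    Dd_fC_mono C ((Finset.erase_subset _ _).trans (Finset.subset_insert _ _)) i
  unfold Dd at hm ⊢
  have h1 := Dd_fC_zero_or_one C (insert j S) i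
  have h2 := Dd_fC_zero_or_one C (S.erase j) i
  unfold Dd at h1 h2
  rcases h1 with h1 | h1 <;> rcases h2 with h2 | h2 <;> rw [h1, h2] at hm ⊢ <;> norm_num at hm <;>
    norm_num

lemma infl_nonneg (C : Submodule (ZMod 2) (ι → ZMod 2)) (i j : ι) {l : ℝ} (h0 : 0 ≤ l)
    (h1 : l ≤ 1) : 0 ≤ infl C i j l :=
  Ex_nonneg h0 h1 fun S _ => by rcases Dd_Dd_zero_or_one C i j S with h | h <;> simp [h]

lemma infl_self (C : Submodule (ZMod 2) (ι → ZMod 2)) (i : ι) (l : ℝ) : infl C i i l = 0 := by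
  unfold infl
  rw [← Ex_const l (univ : Finset ι) 0]
  refine Ex_congr fun S _ => ?_
  have h : insert i (S.erase i) = insert i S := by ext; simp; tauto
  simp [Dd, h]

/-- The sharp-threshold inequality: for a doubly transitive code all influences on the EXIT
function are equal, hence small, so its derivative is at least of order
`(log n) * h * (1 - h)`. -/
lemma exit_deriv_ge {C : Submodule (ZMod 2) (ι → ZMod 2)} (hC : DoublyTransitive C) {m : ℕ}
    (hcard : Fintype.card ι = 2 ^ m) (hm : 1 ≤ m) (i : ι) {l : ℝ} (h0 : 0 ≤ l) (h1 : l ≤ 1) :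
    (m / 20 : ℝ) * (exitAt C i l * (1 - exitAt C i l)) ≤ ∑ j, infl C i j l := by
  set I := ∑ j, infl C i j l with hI
  set h := exitAt C i l with hh
  have hI0 : 0 ≤ I := Finset.sum_nonneg fun j _ => infl_nonneg C i j h0 h1
  have hh0 : 0 ≤ h := exitAt_nonneg C i h0 h1
  have hh1 : h ≤ 1 := exitAt_le_one C i h0 h1
  set n : ℝ := 2 ^ m with hn
  have hn2 : 2 ≤ n := by
    calc (2 : ℝ) = 2 ^ 1 := by norm_num
      _ ≤ n := pow_le_pow_right₀ (by norm_num) hm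
  have hcardR : (Fintype.card ι : ℝ) = n := by rw [hcard]; push_cast; rfl
  have hinf : ∀ j, infl C i j l ≤ I / (n - 1) := by
    intro j
    by_cases hj : i = j
    · rw [← hj, infl_self]
      exact div_nonneg hI0 (by linarith)
    · rw [le_div_iff₀ (by linarith), hI, ← Finset.add_sum_erase _ _ (Finset.mem_univ i), infl_self,
        zero_add, Finset.sum_congr rfl fun j' hj' =>
          infl_eq hC (Finset.ne_of_mem_erase hj').symm hj l, Finset.sum_const, nsmul_eq_mul,
        Finset.card_erase_of_mem (Finset.mem_univ i), Finset.card_univ, hcard,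
        Nat.cast_sub Nat.one_le_two_pow]
      push_cast
      rw [mul_comm]
  have hD : Dir l univ (Dd i (fC C)) = I := by
    unfold Dir
    refine Finset.sum_congr rfl fun j _ => Ex_congr fun S _ => ?_
    rcases Dd_Dd_zero_or_one C i j S with e | e <;> simp [e]
  have hsq : Ex l univ (fun S => Dd i (fC C) S ^ 2) = h :=
    Ex_congr fun S _ => by rcases Dd_fC_zero_or_one C S i with e | e <;> simp [e]
  set a : ℝ := m / 2 * Real.log 2 with ha
  have hea : Real.exp a ^ 2 = n := by
    have h2m : Real.exp (m * Real.log 2) = 2 ^ m := by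
      rw [Real.exp_nat_mul, Real.exp_log (by norm_num)]
    rw [← Real.exp_nat_mul, ha, hn, ← h2m]
    congr 1
    push_cast
    ring
  have hk := kkl h0 h1 a (I / (n - 1)) univ (Dd i (fC C)) (fun j _ => by
    refine le_trans (le_of_eq ?_) (hinf j)
    refine Ex_congr fun S _ => ?_
    rcases Dd_Dd_zero_or_one C i j S with e | e <;> simp [e])
  rw [hD, hsq, Finset.card_univ, hcardR, show Ex l univ (Dd i (fC C)) = h from rfl] at hk
  have hl2 : (1 / 2 : ℝ) < Real.log 2 := by have := Real.log_two_gt_d9; linarith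
  have ham : (m / 4 : ℝ) ≤ a := by
    rw [ha]
    have : (0 : ℝ) ≤ m := Nat.cast_nonneg m
    nlinarith
  have hea1 : a + 1 ≤ Real.exp a := Real.add_one_le_exp a
  set E := Real.exp a with hE
  have hE0 : 0 < E := Real.exp_pos a
  have ha0 : 0 ≤ a := le_trans (by positivity) ham
  have hv0 : 0 ≤ h * (1 - h) := mul_nonneg hh0 (by linarith)
  have hv1 : h * (1 - h) ≤ 1 := by nlinarith
  have h5 : a * (h * (1 - h)) ≤ 5 * I := by
    rcases le_total I E with hIE | hIE
    · have h4 : n * ((I / (n - 1)) ^ 2 * E) ≤ 4 * I := by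
        have hne : n * (I / (n - 1)) ^ 2 ≤ 4 * (I ^ 2 / n) := by
          rw [div_pow, mul_div_assoc', mul_div_assoc', div_le_div_iff₀ (by nlinarith) (by linarith)]
          have : n ^ 2 ≤ 4 * (n - 1) ^ 2 := by nlinarith
          nlinarith [sq_nonneg I]
        have h6 : I ^ 2 / n * E ≤ I := by
          rw [← hea, div_mul_eq_mul_div, div_le_iff₀ (by positivity)]
          nlinarith [mul_nonneg hI0 hE0.le]
        calc n * ((I / (n - 1)) ^ 2 * E) = (n * (I / (n - 1)) ^ 2) * E := by ring
          _ ≤ (4 * (I ^ 2 / n)) * E := mul_le_mul_of_nonneg_right hne hE0.le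
          _ = 4 * (I ^ 2 / n * E) := by ring
          _ ≤ 4 * I := by linarith
      have : h - h ^ 2 = h * (1 - h) := by ring
      rw [this] at hk
      linarith
    · nlinarith
  nlinarith

lemma gronwall {G G' : ℝ → ℝ} (hG : ∀ t, HasDerivAt G (G' t) t) {x y c : ℝ} (hxy : x ≤ y)
    (h : ∀ t ∈ Set.Icc x y, c * G t ≤ G' t) : G x ≤ Real.exp (-(c * (y - x))) * G y := by
  have hd : ∀ t, HasDerivAt (fun t => Real.exp (-(c * t)) * G t)
      (Real.exp (-(c * t)) * (-(c * 1)) * G t + Real.exp (-(c * t)) * G' t) t := fun t =>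
    (((hasDerivAt_id t).const_mul c).neg.exp).mul (hG t)
  have hmono : MonotoneOn (fun t => Real.exp (-(c * t)) * G t) (Set.Icc x y) := by
    refine monotoneOn_of_deriv_nonneg (convex_Icc x y)
      (fun t _ => (hd t).continuousAt.continuousWithinAt)
      (fun t _ => (hd t).differentiableAt.differentiableWithinAt) fun t ht => ?_
    rw [(hd t).deriv]
    have := h t (interior_subset ht)
    have he := Real.exp_pos (-(c * t))
    nlinarith
  have := hmono (Set.left_mem_Icc.2 hxy) (Set.right_mem_Icc.2 hxy) hxy
  simp only at this
  calc G x = Real.exp (c * x) * (Real.exp (-(c * x)) * G x) := by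
        rw [← mul_assoc, ← Real.exp_add]; simp
    _ ≤ Real.exp (c * x) * (Real.exp (-(c * y)) * G y) :=
        mul_le_mul_of_nonneg_left this (Real.exp_pos _).le
    _ = _ := by rw [← mul_assoc, ← Real.exp_add]; congr 2; ring

lemma mvt_lower {G G' : ℝ → ℝ} (hG : ∀ t, HasDerivAt G (G' t) t) {x y c : ℝ} (hxy : x ≤ y)
    (h : ∀ t ∈ Set.Icc x y, c ≤ G' t) : c * (y - x) ≤ G y - G x := by
  refine (convex_Icc x y).mul_sub_le_image_sub_of_le_deriv
    (fun t _ => (hG t).continuousAt.continuousWithinAt)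
    (fun t _ => (hG t).differentiableAt.differentiableWithinAt) (fun t ht => ?_) x
    (Set.left_mem_Icc.2 hxy) y (Set.right_mem_Icc.2 hxy) hxy
  rw [(hG t).deriv]
  exact h t (interior_subset ht)

lemma mvt_upper {G G' : ℝ → ℝ} (hG : ∀ t, HasDerivAt G (G' t) t) {x y c : ℝ} (hxy : x ≤ y)
    (h : ∀ t ∈ Set.Icc x y, G' t ≤ c) : G y - G x ≤ c * (y - x) := by
  have := mvt_lower (fun t => (hG t).neg) hxy (c := -c) fun t ht => neg_le_neg (h t ht)
  simp only [Pi.neg_apply] at this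
  linarith

lemma exitAt_mono (C : Submodule (ZMod 2) (ι → ZMod 2)) (i : ι) {x y : ℝ} (h0 : 0 ≤ x)
    (hxy : x ≤ y) (h1 : y ≤ 1) : exitAt C i x ≤ exitAt C i y := by
  have := mvt_lower (hasDerivAt_exitAt C i) hxy (c := 0) fun t ht =>
    Finset.sum_nonneg fun j _ => infl_nonneg C i j (h0.trans ht.1) (ht.2.trans h1)
  linarith

lemma muC_mono (C : Submodule (ZMod 2) (ι → ZMod 2)) {x y : ℝ} (h0 : 0 ≤ x)
    (hxy : x ≤ y) (h1 : y ≤ 1) : muC C x ≤ muC C y := by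
  have := mvt_lower (hasDerivAt_muC C) hxy (c := 0) fun t ht =>
    Finset.sum_nonneg fun j _ => exitAt_nonneg C j (h0.trans ht.1) (ht.2.trans h1)
  linarith

lemma sum_exitAt {C : Submodule (ZMod 2) (ι → ZMod 2)} (hC : DoublyTransitive C) (i : ι) (l : ℝ) :
    ∑ j, exitAt C j l = Fintype.card ι * exitAt C i l := by
  rw [Finset.sum_congr rfl fun j _ => exitAt_eq hC j i l]
  simp

lemma muC_le {C : Submodule (ZMod 2) (ι → ZMod 2)} (hC : DoublyTransitive C) (i : ι) {l : ℝ}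
    (h0 : 0 ≤ l) (h1 : l ≤ 1) : muC C l ≤ Fintype.card ι * exitAt C i l := by
  have h := mvt_upper (hasDerivAt_muC C) h0 (c := Fintype.card ι * exitAt C i l) fun t ht => by
    rw [sum_exitAt hC i]
    exact mul_le_mul_of_nonneg_left (exitAt_mono C i ht.1 ht.2 h1) (Nat.cast_nonneg _)
  have hz : muC C 0 = 0 := by rw [muC_eq, Ex_zero, fC_empty]
  have := mul_nonneg (Nat.cast_nonneg (α := ℝ) (Fintype.card ι)) (exitAt_nonneg C i h0 h1)
  rw [hz] at h
  nlinarith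

/-- The area theorem turned into a bound: `(1 - l) h(l) ≤ ∫_l^1 h ≤ 1 - R(C)`. -/
lemma exitAt_area {C : Submodule (ZMod 2) (ι → ZMod 2)} (hC : DoublyTransitive C) (i : ι) {l : ℝ}
    (h0 : 0 ≤ l) (h1 : l ≤ 1) : exitAt C i l * (1 - l) ≤ 1 - codeRate C := by
  have h := mvt_lower (hasDerivAt_muC C) h1 (c := Fintype.card ι * exitAt C i l) fun t ht => by
    rw [sum_exitAt hC i]
    exact mul_le_mul_of_nonneg_left (exitAt_mono C i h0 ht.1 ht.2) (Nat.cast_nonneg _)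
  have h2 := muC_nonneg C h0 h1
  have hone : muC C 1 = Fintype.card ι - Module.finrank (ZMod 2) C := by
    rw [muC_eq, Ex_one, fC, rankC_univ, Finset.card_univ]
  have hpos : (0 : ℝ) < Fintype.card ι := by exact_mod_cast Fintype.card_pos_iff.2 ⟨i⟩
  rw [hone] at h
  unfold codeRate
  rw [one_sub_div hpos.ne', le_div_iff₀ hpos]
  linarith

/-- Below the rate, the EXIT function is polynomially small in the length. -/
lemma exitAt_small {C : Submodule (ZMod 2) (ι → ZMod 2)} (hC : DoublyTransitive C) {m : ℕ}
    (hcard : Fintype.card ι = 2 ^ m) (hm : 1 ≤ m) (i : ι) {R ε : ℝ} (hR : R < 1) (hε : 0 < ε)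
    (hεR : 2 * ε ≤ R) (hrate : R - ε / 2 ≤ codeRate C) :
    exitAt C i (R - 2 * ε) ≤ Real.exp (-(m * (ε ^ 2 / 80))) := by
  have hq := exitAt_area hC i (l := R - ε) (by linarith) (by linarith)
  have hq2 : exitAt C i (R - ε) ≤ 1 - ε / 4 := by
    by_contra hcon
    push Not at hcon
    have : (1 - ε / 4) * (1 - (R - ε)) < exitAt C i (R - ε) * (1 - (R - ε)) :=
      mul_lt_mul_of_pos_right hcon (by linarith)
    nlinarith
  have hg := gronwall (hasDerivAt_exitAt C i) (x := R - 2 * ε) (y := R - ε)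
    (c := m / 20 * (ε / 4)) (by linarith) fun t ht => by
      have ht0 : 0 ≤ t := by linarith [ht.1]
      have ht1 : t ≤ 1 := by linarith [ht.2]
      refine le_trans ?_ (exit_deriv_ge hC hcard hm i ht0 ht1)
      have ha := exitAt_nonneg C i ht0 ht1
      have hb := (exitAt_mono C i ht0 ht.2 (by linarith)).trans hq2
      have : ε / 4 * exitAt C i t ≤ exitAt C i t * (1 - exitAt C i t) := by nlinarith
      rw [mul_assoc]
      exact mul_le_mul_of_nonneg_left this (by positivity)
  refine hg.trans ?_
  rw [show -(m / 20 * (ε / 4) * (R - ε - (R - 2 * ε))) = -(m * (ε ^ 2 / 80)) by ring]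
  have := exitAt_le_one C i (l := R - ε) (by linarith) (by linarith)
  nlinarith [Real.exp_pos (-(m * (ε ^ 2 / 80)))]

/-- The second differential inequality. If every set of nullity at most `τ` has at least `K` times
as many circuit elements as its nullity, then `μ' ≥ K (μ - 4 n / τ)` as long as `μ ≤ τ / 2`; the
error term comes from Chebyshev's inequality with the Efron-Stein bound `Var f_C ≤ n`. -/
lemma muC_deriv_ge (C : Submodule (ZMod 2) (ι → ZMod 2)) {τ K l : ℝ} (hτ : 0 < τ) (hK : 0 ≤ K)
    (hcirc : ∀ S, fC C S ≤ τ → K * fC C S ≤ #(circ C S)) (h0 : 0 ≤ l) (h1 : l ≤ 1)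
    (hM : 2 * muC C l ≤ τ) :
    K * (muC C l - 4 * Fintype.card ι / τ) ≤ ∑ i, exitAt C i l := by
  set M := muC C l with hMdef
  have hM0 : 0 ≤ M := muC_nonneg C h0 h1
  have hEM : Ex l univ (fC C) = M := (muC_eq C l).symm
  have hvar : Ex l univ (fun S => fC C S ^ 2) - M ^ 2 ≤ Fintype.card ι := by
    have := efron_stein h0 h1 univ (fC C)
    rw [hEM] at this
    refine this.trans ?_
    unfold Dir
    have hb : ∀ i ∈ (univ : Finset ι), Ex l univ (fun S => Dd i (fC C) S ^ 2) ≤ 1 := by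
      intro i _
      have := Ex_mono h0 h1 (A := univ) (F := fun S => Dd i (fC C) S ^ 2) (G := fun _ => 1)
        fun S _ => by rcases Dd_fC_zero_or_one C S i with e | e <;> simp [e]
      rwa [Ex_const] at this
    exact (Finset.sum_le_sum hb).trans (by simp)
  have hpt : ∀ S, K * fC C S - (K * (4 / τ)) * (fC C S ^ 2 - (2 * M) * fC C S + M ^ 2)
      ≤ ∑ i, Dd i (fC C) S := by
    intro S
    have hc := card_circ_le C S
    have hf := fC_nonneg C S
    have hsq : 0 ≤ fC C S ^ 2 - (2 * M) * fC C S + M ^ 2 := by nlinarith [sq_nonneg (fC C S - M)]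
    have hK4 : 0 ≤ K * (4 / τ) := by positivity
    rcases le_or_gt (fC C S) τ with h | h
    · have := hcirc S h
      nlinarith
    · have hle : fC C S ≤ (4 / τ) * (fC C S ^ 2 - (2 * M) * fC C S + M ^ 2) := by
        rw [div_mul_eq_mul_div, le_div_iff₀ hτ]
        have h2 : fC C S / 2 ≤ fC C S - M := by linarith
        nlinarith
      have := mul_le_mul_of_nonneg_left hle hK
      have hn : (0 : ℝ) ≤ #(circ C S) := Nat.cast_nonneg _
      nlinarith
  have hE := Ex_mono h0 h1 (A := univ) fun S _ => hpt S
  rw [Ex_sub, Ex_mul, Ex_mul, Ex_add, Ex_sub, Ex_mul, Ex_const, Ex_sum, hEM] at hE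
  refine le_trans ?_ hE
  have hK4 : 0 ≤ K * (4 / τ) := by positivity
  have := mul_le_mul_of_nonneg_left hvar hK4
  have e : K * (M - 4 * Fintype.card ι / τ) = K * M - K * (4 / τ) * Fintype.card ι := by ring
  rw [e]
  nlinarith

end Calculus

/-! ### Asymptotics -/

section Assembly

lemma base_gt_one {δ : ℝ} (h0 : 0 < δ) (h1 : δ ≤ 1 / 4) :
    1 < (1 + δ) / (1 + δ / 2) ^ 2 * Real.exp (δ * (Real.log (1 + δ / 2) / Real.log 2)) := by
  have hl2 : 0 < Real.log 2 := Real.log_pos (by norm_num)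
  have hl2' : Real.log 2 ≤ 1 := by have := Real.log_two_lt_d9; linarith
  have hlog : 1 - (1 + δ / 2)⁻¹ ≤ Real.log (1 + δ / 2) :=
    Real.one_sub_inv_le_log_of_pos (by linarith)
  have hlog0 : 0 ≤ Real.log (1 + δ / 2) := Real.log_nonneg (by linarith)
  have hdiv : Real.log (1 + δ / 2) ≤ Real.log (1 + δ / 2) / Real.log 2 := by
    rw [le_div_iff₀ hl2]
    nlinarith
  have hexp := Real.add_one_le_exp (δ * (Real.log (1 + δ / 2) / Real.log 2))
  have hlow : 1 + δ * (1 - (1 + δ / 2)⁻¹)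
      ≤ Real.exp (δ * (Real.log (1 + δ / 2) / Real.log 2)) := by nlinarith
  have hpos : 0 < (1 + δ) / (1 + δ / 2) ^ 2 := by positivity
  refine lt_of_lt_of_le ?_ (mul_le_mul_of_nonneg_left hlow hpos.le)
  have e : (1 + δ) / (1 + δ / 2) ^ 2 * (1 + δ * (1 - (1 + δ / 2)⁻¹))
      = ((1 + δ) * (1 + δ / 2 + δ ^ 2 / 2)) / (1 + δ / 2) ^ 3 := by
    field_simp
    ring
  rw [e, one_lt_div (by positivity)]
  nlinarith [pow_pos h0 2, pow_pos h0 3]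

/-- For a Reed-Muller code of positive rate, a set whose nullity is at most `2^m exp(-δ m)` has many
more circuit elements than its nullity: the nullity bound at exponent `β = 1 + log₂ (1 + δ/2)`
beats the lower bound on the degree that follows from the rate. -/
lemma circ_large {δ : ℝ} (h0 : 0 < δ) (h1 : δ ≤ 1 / 4) :
    ∃ κ : ℝ, 1 < κ ∧ ∀ (m d : ℕ) (r K : ℝ), 0 < r → 1 ≤ K →
      r ≤ codeRate (ReedMuller m d) → K ^ 2 < r * κ ^ m →
      ∀ S, fC (ReedMuller m d) S ≤ 2 ^ m * Real.exp (-(δ * m)) →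
        K * fC (ReedMuller m d) S ≤ #(circ (ReedMuller m d) S) := by
  set ρ : ℝ := 1 + δ / 2 with hρ
  set γ : ℝ := Real.log ρ / Real.log 2 with hγ
  refine ⟨(1 + δ) / ρ ^ 2 * Real.exp (δ * γ), base_gt_one h0 h1, ?_⟩
  intro m d r K hr hK hrate hKκ S hS
  have hρ0 : 0 < ρ := by rw [hρ]; linarith
  have hl2 : 0 < Real.log 2 := Real.log_pos (by norm_num)
  have hγ0 : 0 ≤ γ := div_nonneg (Real.log_nonneg (by rw [hρ]; linarith)) hl2.le
  have hγ1 : γ ≤ 1 := by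
    rw [hγ, div_le_one hl2]
    exact Real.log_le_log hρ0 (by rw [hρ]; linarith)
  have h2γ : (2 : ℝ) ^ γ = ρ := by
    rw [Real.rpow_def_of_pos (by norm_num), hγ, mul_div_cancel₀ _ hl2.ne', Real.exp_log hρ0]
  have hθ : (2 : ℝ) ^ (1 + γ) - 1 = 1 + δ := by
    rw [Real.rpow_add (by norm_num), Real.rpow_one, h2γ, hρ]; ring
  by_contra hcon
  push Not at hcon
  set f := fC (ReedMuller m d) S with hf
  have hf0 : 0 ≤ f := fC_nonneg _ _
  have hfpos : 0 < f := by
    rcases hf0.eq_or_lt with h | h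
    · rw [← h, mul_zero] at hcon
      exact absurd hcon (not_lt.2 (Nat.cast_nonneg _))
    · exact h
  have hnull := nullity_bound (β := 1 + γ) (by linarith) m (d + 1) (circ (ReedMuller m d) S)
  rw [hθ, show RMlt m (d + 1) = ReedMuller m d from rfl, fC_circ, ← hf] at hnull
  have hc : ((#(circ (ReedMuller m d) S) : ℕ) : ℝ) ^ (1 + γ) ≤ K ^ 2 * (f * f ^ γ) := by
    calc ((#(circ (ReedMuller m d) S) : ℕ) : ℝ) ^ (1 + γ) ≤ (K * f) ^ (1 + γ) :=
          Real.rpow_le_rpow (Nat.cast_nonneg _) hcon.le (by linarith)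
      _ = K ^ (1 + γ) * (f * f ^ γ) := by
          rw [Real.mul_rpow (by linarith) hf0, Real.rpow_add hfpos, Real.rpow_one]
      _ ≤ K ^ (2 : ℝ) * (f * f ^ γ) :=
          mul_le_mul_of_nonneg_right (Real.rpow_le_rpow_of_exponent_le hK (by linarith))
            (by positivity)
      _ = K ^ 2 * (f * f ^ γ) := by norm_num
  have hfγ : f ^ γ ≤ ρ ^ m * Real.exp (-(δ * γ)) ^ m := by
    calc f ^ γ ≤ (2 ^ m * Real.exp (-(δ * m))) ^ γ := Real.rpow_le_rpow hf0 hS hγ0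
      _ = _ := by
          rw [Real.mul_rpow (by positivity) (Real.exp_pos _).le, ← Real.rpow_natCast 2 m,
            ← Real.rpow_mul (by norm_num), mul_comm (m : ℝ) γ, Real.rpow_mul (by norm_num), h2γ,
            Real.rpow_natCast, ← Real.exp_mul, ← Real.exp_nat_mul]
          congr 2
          ring
  have hd1 : (1 + δ) ^ (d + 1) ≤ K ^ 2 * (ρ ^ m * Real.exp (-(δ * γ)) ^ m) := by
    have hle : f ≤ ((1 + δ)⁻¹) ^ (d + 1) * (K ^ 2 * (f * f ^ γ)) :=
      hnull.trans (mul_le_mul_of_nonneg_left hc (by positivity))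
    rw [inv_pow, inv_mul_eq_div, le_div_iff₀ (by positivity)] at hle
    have hle2 : f * (1 + δ) ^ (d + 1) ≤ f * (K ^ 2 * f ^ γ) := by linarith
    exact (le_of_mul_le_mul_left hle2 hfpos).trans (mul_le_mul_of_nonneg_left hfγ (by positivity))
  have hdim := RM_finrank_le m d (θ := 1 + δ) (by linarith)
  have hrate2 : r * 2 ^ m ≤ (1 + δ) ^ d * (1 + (1 + δ)⁻¹) ^ m := by
    refine le_trans ?_ hdim
    unfold codeRate at hrate
    rwa [le_div_iff₀ (by simp), show (Fintype.card (Fin m → ZMod 2) : ℝ) = 2 ^ m by simp] at hrate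
  have hbase : 1 + (1 + δ)⁻¹ = 2 * (ρ / (1 + δ)) := by
    rw [hρ]; field_simp; ring
  rw [hbase, mul_pow, div_pow] at hrate2
  have hr3 : r * (1 + δ) ^ m ≤ (1 + δ) ^ d * ρ ^ m := by
    have h2m : (0 : ℝ) < 2 ^ m := by positivity
    have hdm : (0 : ℝ) < (1 + δ) ^ m := by positivity
    have : r * 2 ^ m * (1 + δ) ^ m ≤ (1 + δ) ^ d * (2 ^ m * (ρ ^ m / (1 + δ) ^ m)) * (1 + δ) ^ m :=
      mul_le_mul_of_nonneg_right hrate2 hdm.le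
    have e : (1 + δ) ^ d * (2 ^ m * (ρ ^ m / (1 + δ) ^ m)) * (1 + δ) ^ m
        = 2 ^ m * ((1 + δ) ^ d * ρ ^ m) := by field_simp
    rw [e] at this
    have e2 : 2 ^ m * (r * (1 + δ) ^ m) ≤ 2 ^ m * ((1 + δ) ^ d * ρ ^ m) := by linarith
    exact le_of_mul_le_mul_left e2 h2m
  have hdd : (1 + δ) ^ d ≤ (1 + δ) ^ (d + 1) := pow_le_pow_right₀ (by linarith) (by omega)
  have hρm : (0 : ℝ) < ρ ^ m := by positivity
  have h4 : r * (1 + δ) ^ m ≤ K ^ 2 * (ρ ^ m * Real.exp (-(δ * γ)) ^ m) * ρ ^ m :=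
    hr3.trans (mul_le_mul_of_nonneg_right (hdd.trans hd1) hρm.le)
  rw [Real.exp_neg, inv_pow] at h4
  rw [mul_pow, div_pow, ← pow_mul, mul_comm 2 m, pow_mul] at hKκ
  have hEm : (0 : ℝ) < Real.exp (δ * γ) ^ m := by positivity
  have h5 : r * ((1 + δ) ^ m / (ρ ^ m) ^ 2 * Real.exp (δ * γ) ^ m) ≤ K ^ 2 := by
    rw [div_mul_eq_mul_div, mul_div_assoc', div_le_iff₀ (by positivity)]
    calc r * ((1 + δ) ^ m * Real.exp (δ * γ) ^ m) = r * (1 + δ) ^ m * Real.exp (δ * γ) ^ m := by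
          ring
      _ ≤ K ^ 2 * (ρ ^ m * (Real.exp (δ * γ) ^ m)⁻¹) * ρ ^ m * Real.exp (δ * γ) ^ m :=
          mul_le_mul_of_nonneg_right h4 hEm.le
      _ = K ^ 2 * (ρ ^ m) ^ 2 := by field_simp
  exact absurd hKκ (not_lt.2 h5)

/-- The sum of the two error terms is eventually at most `ε √n`. -/
lemma error_small {δ ε : ℝ} (hδ : δ ≤ 1 / 4) (hε : 0 < ε) :
    ∀ᶠ m : ℕ in atTop, 4 * Real.exp (δ * m) + Real.exp (-((m : ℝ) ^ 2 * ε)) * 2 ^ m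
      ≤ ε * Real.sqrt (2 ^ m) := by
  have hs : ∀ m : ℕ, Real.sqrt (2 ^ m) = Real.exp (Real.log 2 / 2 * m) := by
    intro m
    rw [Real.sqrt_eq_iff_eq_sq (by positivity) (Real.exp_pos _).le, ← Real.exp_nat_mul]
    push_cast
    rw [show 2 * (Real.log 2 / 2 * m) = m * Real.log 2 by ring, Real.exp_nat_mul,
      Real.exp_log (by norm_num)]
  have hl2 : 0.69 < Real.log 2 := by have := Real.log_two_gt_d9; linarith
  have hl2' : Real.log 2 < 0.7 := by have := Real.log_two_lt_d9; linarith
  have hlim : Tendsto (fun m : ℕ => Real.exp (-(0.09 * (m : ℝ)))) atTop (nhds 0) :=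
    Real.tendsto_exp_neg_atTop_nhds_zero.comp
      (tendsto_natCast_atTop_atTop.const_mul_atTop (by norm_num))
  have hev := hlim.eventually (gt_mem_nhds (show (0 : ℝ) < ε / 5 by positivity))
  have hbig := (tendsto_natCast_atTop_atTop (R := ℝ)).eventually_ge_atTop (1 / ε)
  filter_upwards [hev, hbig] with m hm1 hm2
  have hm0 : (0 : ℝ) ≤ m := Nat.cast_nonneg m
  have hme : 1 ≤ m * ε := by rwa [div_le_iff₀ hε] at hm2
  rw [hs]
  have h2m : (2 : ℝ) ^ m = Real.exp (m * Real.log 2) := by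
    rw [Real.exp_nat_mul, Real.exp_log (by norm_num)]
  have t1 : Real.exp (δ * m) ≤ Real.exp (-(0.09 * (m : ℝ))) * Real.exp (Real.log 2 / 2 * m) := by
    rw [← Real.exp_add]
    exact Real.exp_le_exp.2 (by nlinarith)
  have t2 : Real.exp (-((m : ℝ) ^ 2 * ε)) * 2 ^ m
      ≤ Real.exp (-(0.09 * (m : ℝ))) * Real.exp (Real.log 2 / 2 * m) := by
    rw [h2m, ← Real.exp_add, ← Real.exp_add]
    refine Real.exp_le_exp.2 ?_
    have : (m : ℝ) ≤ m ^ 2 * ε := by nlinarith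
    nlinarith
  have hE := Real.exp_pos (Real.log 2 / 2 * m)
  nlinarith [mul_lt_mul_of_pos_right hm1 hE]

/-- At distance `3ε` below the rate, `μ` is eventually at most `ε √n`. -/
lemma muC_eventually_small {R ε : ℝ} (hR1 : R < 1) (hε : 0 < ε) (hεR : 4 * ε ≤ R) :
    ∀ᶠ m : ℕ in atTop, ∀ d, R - ε / 2 ≤ codeRate (ReedMuller m d) →
      muC (ReedMuller m d) (R - 3 * ε) ≤ ε * Real.sqrt (2 ^ m) := by
  set δ : ℝ := ε ^ 2 / 400 with hδ
  have hδ0 : 0 < δ := by positivity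
  have hδ1 : δ ≤ 1 / 4 := by rw [hδ]; nlinarith
  obtain ⟨κ, hκ, hcirc⟩ := circ_large hδ0 hδ1
  have hpoly : ∀ᶠ m : ℕ in atTop, ((m : ℝ) ^ 2) ^ 2 < R / 2 * κ ^ m := by
    have := (tendsto_pow_const_div_const_pow_of_one_lt 4 hκ).eventually
      (gt_mem_nhds (show (0 : ℝ) < R / 2 by linarith))
    filter_upwards [this] with m hm
    rw [div_lt_iff₀ (by positivity)] at hm
    rw [← pow_mul]
    exact hm
  have hexp : ∀ᶠ m : ℕ in atTop, 1 ≤ 4 * δ * (m : ℝ) :=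
    (tendsto_natCast_atTop_atTop.const_mul_atTop (by positivity)).eventually_ge_atTop 1
  filter_upwards [hpoly, hexp, error_small hδ1 hε, eventually_ge_atTop 1] with m hm1 hm2 hm3 hm d
    hrate
  refine le_trans ?_ hm3
  set C := ReedMuller m d with hC
  have hDT : DoublyTransitive C := RM_doublyTransitive m d
  have hcard : Fintype.card (Fin m → ZMod 2) = 2 ^ m := by simp
  have hcardR : (Fintype.card (Fin m → ZMod 2) : ℝ) = 2 ^ m := by simp
  have hexit := exitAt_small hDT hcard hm 0 hR1 hε (by linarith) hrate
  have hM0 := muC_le hDT 0 (l := R - 2 * ε) (by linarith) (by linarith)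
  rw [hcardR] at hM0
  set τ : ℝ := 2 ^ m * Real.exp (-(δ * m)) with hτ
  have hτ0 : 0 < τ := by positivity
  have h2m : (0 : ℝ) < 2 ^ m := by positivity
  have hMτ : 2 * muC C (R - 2 * ε) ≤ τ := by
    have e : Real.exp (-(m * (ε ^ 2 / 80))) = Real.exp (-(δ * m)) * Real.exp (-(4 * δ * m)) := by
      rw [← Real.exp_add, hδ]; congr 1; ring
    have he : 2 * Real.exp (-(4 * δ * m)) ≤ 1 := by
      rw [Real.exp_neg, ← div_eq_mul_inv, div_le_one (Real.exp_pos _)]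
      have := Real.add_one_le_exp (4 * δ * m)
      linarith
    rw [e] at hexit
    calc 2 * muC C (R - 2 * ε) ≤ 2 * (2 ^ m * exitAt C 0 (R - 2 * ε)) := by linarith
      _ ≤ 2 * (2 ^ m * (Real.exp (-(δ * m)) * Real.exp (-(4 * δ * m)))) := by gcongr
      _ = τ * (2 * Real.exp (-(4 * δ * m))) := by rw [hτ]; ring
      _ ≤ τ := by nlinarith
  have hK : (1 : ℝ) ≤ (m : ℝ) ^ 2 := one_le_pow₀ (by exact_mod_cast hm)
  have hci := hcirc m d (R / 2) ((m : ℝ) ^ 2) (by linarith) hK (by linarith) hm1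
  have hg := gronwall (G := fun t => muC C t - 4 * Real.exp (δ * m))
    (fun t => (hasDerivAt_muC C t).sub_const _) (x := R - 3 * ε) (y := R - 2 * ε)
    (c := (m : ℝ) ^ 2) (by linarith) fun t ht => by
      have ht0 : 0 ≤ t := by linarith [ht.1]
      have ht1 : t ≤ 1 := by linarith [ht.2]
      have := muC_deriv_ge C hτ0 (by positivity) hci ht0 ht1
        (by linarith [muC_mono C ht0 ht.2 (by linarith)])
      rw [hcardR] at this
      have e : 4 * 2 ^ m / τ = 4 * Real.exp (δ * m) := by
        rw [hτ, Real.exp_neg]; field_simp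
      rwa [e] at this
  rw [show R - 2 * ε - (R - 3 * ε) = ε by ring] at hg
  have hle : muC C (R - 2 * ε) - 4 * Real.exp (δ * m) ≤ 2 ^ m := by
    have := exitAt_le_one C 0 (l := R - 2 * ε) (by linarith) (by linarith)
    have := Real.exp_pos (δ * m)
    nlinarith
  have := mul_le_mul_of_nonneg_left hle (Real.exp_pos (-((m : ℝ) ^ 2 * ε))).le
  linarith

lemma exists_diagonal {P : ℕ → ℕ → Prop} (h : ∀ j, ∀ᶠ k in atTop, P j k) :
    ∃ φ : ℕ → ℕ, Tendsto φ atTop atTop ∧ ∀ᶠ k in atTop, P (φ k) k := by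
  classical
  simp only [eventually_atTop] at h
  choose N hN using h
  refine ⟨fun k => Nat.findGreatest (fun j => N j ≤ k) k, ?_, ?_⟩
  · refine tendsto_atTop.2 fun j => ?_
    filter_upwards [eventually_ge_atTop j, eventually_ge_atTop (N j)] with k h1 h2
    exact Nat.le_findGreatest h1 h2
  · filter_upwards [eventually_ge_atTop (N 0)] with k hk
    exact hN _ _ (Nat.findGreatest_spec (P := fun j => N j ≤ k) (Nat.zero_le k) hk)

end Assembly

/-- for Reed-Muller codes of rate tending to `R`,
`μ_{C_k}(R**_k) = o(√(n_k))` for suitable `R**_k → R`. -/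
theorem muC_reed_muller_sqrt (R : ℝ) (hR0 : 0 < R) (hR1 : R < 1)
    (m d : ℕ → ℕ) (hdm : ∀ k, d k ≤ m k)
    (hm : Filter.Tendsto (fun k => 2 ^ m k) Filter.atTop Filter.atTop)
    (hrate : Filter.Tendsto (fun k => codeRate (ReedMuller (m k) (d k)))
      Filter.atTop (nhds R)) :
    ∃ Rss : ℕ → ℝ, Filter.Tendsto Rss Filter.atTop (nhds R) ∧
      Filter.Tendsto
        (fun k => muC (ReedMuller (m k) (d k)) (Rss k) / Real.sqrt (2 ^ m k))
        Filter.atTop (nhds 0) := by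
  have hm' : Tendsto m atTop atTop := by
    refine tendsto_atTop.2 fun b => ?_
    filter_upwards [hm.eventually_gt_atTop (2 ^ b)] with k hk
    exact ((Nat.pow_lt_pow_iff_right (by norm_num)).1 hk).le
  set ε : ℕ → ℝ := fun j => R / 4 * (1 / ((j : ℝ) + 1)) with hεdef
  have hε0 : ∀ j, 0 < ε j := fun j => by simp only [hεdef]; positivity
  have hεR : ∀ j, 4 * ε j ≤ R := by
    intro j
    have : 1 / ((j : ℝ) + 1) ≤ 1 := by
      rw [div_le_one (by positivity)]
      linarith [(Nat.cast_nonneg j : (0 : ℝ) ≤ j)]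
    simp only [hεdef]
    nlinarith
  have hεlim : Tendsto ε atTop (nhds 0) := by
    have := (tendsto_one_div_add_atTop_nhds_zero_nat (𝕜 := ℝ)).const_mul (R / 4)
    rwa [mul_zero] at this
  obtain ⟨φ, hφ, hev⟩ := exists_diagonal (P := fun j k =>
    muC (ReedMuller (m k) (d k)) (R - 3 * ε j) ≤ ε j * Real.sqrt (2 ^ m k)) fun j => by
      have h1 := hm'.eventually (muC_eventually_small hR1 (hε0 j) (hεR j))
      have h2 := hrate.eventually (lt_mem_nhds (show R - ε j / 2 < R by linarith [hε0 j]))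
      filter_upwards [h1, h2] with k hk1 hk2
      exact hk1 (d k) hk2.le
  refine ⟨fun k => R - 3 * ε (φ k), ?_, ?_⟩
  · have := ((hεlim.comp hφ).const_mul 3).const_sub R
    simpa using this
  · refine squeeze_zero' (Eventually.of_forall fun k => ?_) ?_ (hεlim.comp hφ)
    · refine div_nonneg (muC_nonneg _ ?_ ?_) (Real.sqrt_nonneg _)
      · linarith [hεR (φ k), hε0 (φ k)]
      · linarith [hε0 (φ k)]
    · filter_upwards [hev] with k hk
      rw [div_le_iff₀ (by positivity)]
      exact hk
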